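/- arXiv:1410.7095 — 7 statements merged into one kernel-verified Lean document; each statement's English description precedes it below -/
import Mathlib

section
/- Let K : ℝ^d → ℝ be an interaction potential with ∇K bounded and Lipschitz on ℝ^d. For N particles define γ_i(x₁,…,x_N) = −(1/N) Σ_{j≠i} ∇K(x_i − x_j) for i = 1,…,N. Let x(t) = (x₁(t),…,x_N(t)) be the (unique) solution on [0,T] of the first-order system dx_i/dt = γ_i(x) with x(0) = x⁰. For each ε > 0 let (x_ε(t), v_ε(t)) be the solution of the second-order system dx_i/dt = v_i, ε dv_i/dt = −v_i + γ_i(x), with initial data (x⁰, v⁰). Then as ε → 0 one has x_ε(t) → x(t) for every t ∈ [0,T], and v_ε(t) → γ(x(t)) = (γ₁(x(t)),…,γ_N(x(t))) for every t ∈ (0,T]. -/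
open Set Filter Topology

/-- The first-order velocity field of the aggregation particle model:
`γ i x = -(1/N) ∑_{j ≠ i} ∇K (x i - x j)`. -/
noncomputable def aggVelocity {d N : ℕ}
    (gradK : EuclideanSpace ℝ (Fin d) → EuclideanSpace ℝ (Fin d))
    (x : Fin N → EuclideanSpace ℝ (Fin d)) (i : Fin N) : EuclideanSpace ℝ (Fin d) :=
  -(1 / (N : ℝ)) • ∑ j ∈ Finset.univ.filter (fun j => j ≠ i), gradK (x i - x j)

/-- Duhamel-type estimate for a relaxation equation at a fixed final time. -/
lemma duhamel_bound {E : Type*} [NormedAddCommGroup E] [NormedSpace ℝ E]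
    (v f : ℝ → E) (ε t a b : ℝ) (hε : 0 < ε) (ht : 0 ≤ t) (ha : 0 ≤ a) (hb : 0 ≤ b)
    (hv : ∀ s ∈ Icc (0:ℝ) t, HasDerivAt v (ε⁻¹ • (-(v s) + f s)) s)
    (hf : ∀ s ∈ Icc (0:ℝ) t, ‖f s‖ ≤ a + b * (t - s)) :
    ‖v t‖ ≤ a + b * ε + Real.exp (-(ε⁻¹ * t)) * ‖v 0‖ := by
  have hexp : ∀ s, HasDerivAt (fun s => Real.exp (ε⁻¹ * s)) (Real.exp (ε⁻¹ * s) * ε⁻¹) s := by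
    intro s
    simpa using ((hasDerivAt_id s).const_mul ε⁻¹).exp
  have hw : ∀ s ∈ Icc (0:ℝ) t, HasDerivAt (fun s => Real.exp (ε⁻¹ * s) • v s)
      ((Real.exp (ε⁻¹ * s) * ε⁻¹) • f s) s := by
    intro s hs
    have h := (hexp s).smul (hv s hs)
    convert! h using 1
    module
  have hB : ∀ s, HasDerivAt
      (fun s => Real.exp (ε⁻¹ * s) * (a + b * (t - s) + b * ε) + ‖v 0‖)
      ((Real.exp (ε⁻¹ * s) * ε⁻¹) * (a + b * (t - s))) s := by
    intro s
    have h1 : HasDerivAt (fun s => a + b * (t - s) + b * ε) (-b) s := by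
      simpa using ((((hasDerivAt_id s).const_sub t).const_mul b).const_add a).add_const (b * ε)
    have h := ((hexp s).mul h1).add_const ‖v 0‖
    convert! h using 1
    field_simp
    ring
  have key := image_norm_le_of_norm_deriv_right_le_deriv_boundary
    (f := fun s => Real.exp (ε⁻¹ * s) • v s) (a := 0) (b := t)
    (fun s hs => (hw s hs).continuousAt.continuousWithinAt)
    (fun s hs => (hw s (Ico_subset_Icc_self hs)).hasDerivWithinAt)
    (by simp; positivity) hB
    (by
      intro s hs
      rw [norm_smul, Real.norm_of_nonneg (by positivity)]
      exact mul_le_mul_of_nonneg_left (hf s (Ico_subset_Icc_self hs)) (by positivity))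
    (right_mem_Icc.2 ht)
  simp only [norm_smul, Real.norm_of_nonneg (Real.exp_pos _).le, sub_self, mul_zero,
    add_zero] at key
  have hp := Real.exp_pos (ε⁻¹ * t)
  rw [Real.exp_neg]
  have : ‖v t‖ = (Real.exp (ε⁻¹ * t))⁻¹ * (Real.exp (ε⁻¹ * t) * ‖v t‖) := by
    field_simp
  rw [this]
  calc _ ≤ (Real.exp (ε⁻¹ * t))⁻¹ * (Real.exp (ε⁻¹ * t) * (a + b * ε) + ‖v 0‖) := by gcongr
    _ = _ := by field_simp

lemma gronwallBound_smul (c δ K e t : ℝ) :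
    gronwallBound (c * δ) K (c * e) t = c * gronwallBound δ K e t := by
  unfold gronwallBound
  split_ifs <;> ring

/-- The abstract zero-inertia limit. -/
lemma zero_inertia_abstract {E : Type*} [NormedAddCommGroup E] [NormedSpace ℝ E]
    (F : E → E) (M : ℝ) (C : NNReal) (hM : ∀ z, ‖F z‖ ≤ M) (hF : LipschitzWith C F)
    (T : ℝ) (hT : 0 ≤ T) (x₀ v₀ : E) (x : ℝ → E) (hx0 : x 0 = x₀)
    (hx : ∀ t ∈ Icc (0:ℝ) T, HasDerivAt x (F (x t)) t)
    (xε vε : ℝ → ℝ → E)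
    (hxε0 : ∀ ε > (0:ℝ), xε ε 0 = x₀)
    (hvε0 : ∀ ε > (0:ℝ), vε ε 0 = v₀)
    (hxε : ∀ ε > (0:ℝ), ∀ t ∈ Icc (0:ℝ) T, HasDerivAt (xε ε) (vε ε t) t)
    (hvε : ∀ ε > (0:ℝ), ∀ t ∈ Icc (0:ℝ) T,
      HasDerivAt (vε ε) (ε⁻¹ • (-(vε ε t) + F (xε ε t))) t) :
    (∀ t ∈ Icc (0:ℝ) T, Tendsto (fun ε => xε ε t) (𝓝[>] (0:ℝ)) (𝓝 (x t))) ∧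
    (∀ t ∈ Ioc (0:ℝ) T, Tendsto (fun ε => vε ε t) (𝓝[>] (0:ℝ)) (𝓝 (F (x t)))) := by
  have hM0 : 0 ≤ M := (norm_nonneg _).trans (hM 0)
  have hC0 : (0:ℝ) ≤ C := C.2
  set R : ℝ := M + ‖v₀‖ with hR
  have hR0 : 0 ≤ R := by positivity
  have hvb : ∀ ε > (0:ℝ), ∀ t ∈ Icc (0:ℝ) T, ‖vε ε t‖ ≤ R := by
    intro ε hε t ht
    have h := duhamel_bound (vε ε) (fun s => F (xε ε s)) ε t M 0 hε ht.1 hM0 le_rfl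
      (fun s hs => hvε ε hε s ⟨hs.1, hs.2.trans ht.2⟩) (fun s _ => by simpa using hM _)
    rw [hvε0 ε hε] at h
    have h1 : Real.exp (-(ε⁻¹ * t)) ≤ 1 := by
      rw [Real.exp_le_one_iff]
      have := mul_nonneg (inv_pos.2 hε).le ht.1
      linarith
    have h2 : Real.exp (-(ε⁻¹ * t)) * ‖v₀‖ ≤ 1 * ‖v₀‖ := by gcongr
    linarith
  set A : ℝ := gronwallBound ‖v₀‖ C (C * R) T + R with hA
  have hA0 : 0 ≤ A := by
    have := gronwallBound_mono (norm_nonneg v₀) (mul_nonneg hC0 hR0) hC0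
    have h := this hT
    rw [gronwallBound_x0] at h
    have := norm_nonneg v₀
    linarith
  have hxb : ∀ ε > (0:ℝ), ∀ t ∈ Icc (0:ℝ) T, ‖xε ε t - x t‖ ≤ ε * A := by
    intro ε hε t ht
    have hy : ∀ s ∈ Icc (0:ℝ) T,
        HasDerivAt (fun s => xε ε s + ε • vε ε s) (F (xε ε s)) s := by
      intro s hs
      have h := (hxε ε hε s hs).add ((hvε ε hε s hs).const_smul ε)
      convert! h using 1
      rw [smul_smul, mul_inv_cancel₀ hε.ne', one_smul]
      abel
    have h := dist_le_of_approx_trajectories_ODE (v := fun _ => F) (K := C)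
      (f := fun s => xε ε s + ε • vε ε s) (f' := fun s => F (xε ε s)) (g := x)
      (g' := fun s => F (x s)) (a := 0) (b := T) (εf := ε * (C * R)) (εg := 0)
      (δ := ε * ‖v₀‖) (fun _ => hF)
      (fun s hs => (hy s hs).continuousAt.continuousWithinAt)
      (fun s hs => (hy s (Ico_subset_Icc_self hs)).hasDerivWithinAt)
      (by
        intro s hs
        refine (hF.dist_le_mul _ _).trans ?_
        have : dist (xε ε s) (xε ε s + ε • vε ε s) = ε * ‖vε ε s‖ := by
          rw [dist_self_add_right, norm_smul, Real.norm_of_nonneg hε.le]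
        rw [this]
        have := hvb ε hε s (Ico_subset_Icc_self hs)
        calc (C:ℝ) * (ε * ‖vε ε s‖) ≤ C * (ε * R) := by gcongr
          _ = _ := by ring)
      (fun s hs => (hx s hs).continuousAt.continuousWithinAt)
      (fun s hs => (hx s (Ico_subset_Icc_self hs)).hasDerivWithinAt)
      (by intro s hs; simp)
      (by
        simp only [hxε0 ε hε, hvε0 ε hε, hx0]
        rw [dist_self_add_left, norm_smul, Real.norm_of_nonneg hε.le]) t ht
    rw [add_zero, sub_zero, gronwallBound_smul, dist_eq_norm] at h
    have hmono := gronwallBound_mono (norm_nonneg v₀) (mul_nonneg hC0 hR0) hC0 ht.2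
    have h1 : ‖ε • vε ε t‖ ≤ ε * R := by
      rw [norm_smul, Real.norm_of_nonneg hε.le]
      have := hvb ε hε t ht
      gcongr
    calc ‖xε ε t - x t‖ = ‖(xε ε t + ε • vε ε t - x t) - ε • vε ε t‖ := by
          congr 1; abel
      _ ≤ ‖xε ε t + ε • vε ε t - x t‖ + ‖ε • vε ε t‖ := norm_sub_le _ _
      _ ≤ ε * gronwallBound ‖v₀‖ C (C * R) T + ε * R := by
          refine add_le_add (h.trans ?_) h1
          gcongr
      _ = ε * A := by rw [hA]; ring
  have hid : Tendsto (fun ε : ℝ => ε) (𝓝[>] (0:ℝ)) (𝓝 0) := tendsto_nhdsWithin_of_tendsto_nhds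
    tendsto_id
  refine ⟨fun t ht => ?_, fun t ht => ?_⟩
  · rw [tendsto_iff_norm_sub_tendsto_zero]
    refine squeeze_zero' (Eventually.of_forall fun _ => norm_nonneg _) ?_
      (by simpa using hid.mul_const A)
    filter_upwards [self_mem_nhdsWithin] with ε hε
    exact hxb ε hε t ht
  · have htI : t ∈ Icc (0:ℝ) T := ⟨ht.1.le, ht.2⟩
    rw [tendsto_iff_norm_sub_tendsto_zero]
    have hlim : Tendsto (fun ε : ℝ => C * (ε * A) + C * M * ε +
        Real.exp (-(ε⁻¹ * t)) * ‖v₀ - F (x t)‖) (𝓝[>] (0:ℝ)) (𝓝 0) := by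
      have h1 : Tendsto (fun ε : ℝ => Real.exp (-(ε⁻¹ * t))) (𝓝[>] (0:ℝ)) (𝓝 0) :=
        Real.tendsto_exp_neg_atTop_nhds_zero.comp
          (tendsto_inv_nhdsGT_zero.atTop_mul_const ht.1)
      simpa using (((hid.mul_const A).const_mul (C:ℝ)).add (hid.const_mul ((C:ℝ) * M))).add
        (h1.mul_const ‖v₀ - F (x t)‖)
    refine squeeze_zero' (Eventually.of_forall fun _ => norm_nonneg _) ?_ hlim
    filter_upwards [self_mem_nhdsWithin] with ε hε
    have hε : 0 < ε := hε
    have h := duhamel_bound (fun s => vε ε s - F (x t)) (fun s => F (xε ε s) - F (x t)) ε t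
      (C * (ε * A)) (C * M) hε ht.1.le (by positivity) (by positivity)
      (fun s hs => by
        have := (hvε ε hε s ⟨hs.1, hs.2.trans ht.2⟩).sub_const (F (x t))
        convert this using 2
        abel)
      (fun s hs => by
        have hsT : s ∈ Icc (0:ℝ) T := ⟨hs.1, hs.2.trans ht.2⟩
        have h1 := hxb ε hε s hsT
        have h2 := Convex.norm_image_sub_le_of_norm_hasDerivWithin_le
          (fun r hr => (hx r hr).hasDerivWithinAt) (fun r _ => hM (x r)) (convex_Icc 0 T)
          htI hsT
        rw [Real.norm_eq_abs, abs_sub_comm, abs_of_nonneg (sub_nonneg.2 hs.2)] at h2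
        have h3 : ‖xε ε s - x t‖ ≤ ε * A + M * (t - s) := by
          calc _ = ‖(xε ε s - x s) + (x s - x t)‖ := by congr 1; abel
            _ ≤ _ := (norm_add_le _ _).trans (add_le_add h1 h2)
        calc _ ≤ C * ‖xε ε s - x t‖ := hF.norm_sub_le _ _
          _ ≤ C * (ε * A + M * (t - s)) := by gcongr
          _ = _ := by ring)
    simpa [hvε0 ε hε] using h

lemma aggVelocity_bound {d N : ℕ} (hN : 0 < N)
    (gradK : EuclideanSpace ℝ (Fin d) → EuclideanSpace ℝ (Fin d)) (M : ℝ)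
    (hbound : ∀ z, ‖gradK z‖ ≤ M) (x : Fin N → EuclideanSpace ℝ (Fin d)) :
    ‖aggVelocity gradK x‖ ≤ M := by
  have hM0 : 0 ≤ M := (norm_nonneg _).trans (hbound 0)
  have hN' : (0:ℝ) < N := by exact_mod_cast hN
  refine (pi_norm_le_iff_of_nonneg hM0).2 fun i => ?_
  unfold aggVelocity
  rw [norm_smul, norm_neg, Real.norm_of_nonneg (by positivity)]
  have h : ‖∑ j ∈ Finset.univ.filter (fun j => j ≠ i), gradK (x i - x j)‖ ≤ N * M := by
    refine (norm_sum_le_of_le _ fun j _ => hbound _).trans ?_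
    rw [Finset.sum_const, nsmul_eq_mul]
    gcongr
    exact (Finset.card_le_univ _).trans (by simp)
  calc _ ≤ 1 / (N:ℝ) * (N * M) := by gcongr
    _ = M := by field_simp

lemma aggVelocity_lipschitz {d N : ℕ} (hN : 0 < N)
    (gradK : EuclideanSpace ℝ (Fin d) → EuclideanSpace ℝ (Fin d)) (L : NNReal)
    (hlip : LipschitzWith L gradK) :
    LipschitzWith (L * 2) (aggVelocity (N := N) gradK) := by
  have hN' : (0:ℝ) < N := by exact_mod_cast hN
  refine LipschitzWith.of_dist_le_mul fun x y => ?_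
  refine (dist_pi_le_iff (by positivity)).2 fun i => ?_
  unfold aggVelocity
  rw [dist_eq_norm, ← smul_sub, ← Finset.sum_sub_distrib, norm_smul, norm_neg,
    Real.norm_of_nonneg (by positivity)]
  have h : ‖∑ j ∈ Finset.univ.filter (fun j => j ≠ i),
      (gradK (x i - x j) - gradK (y i - y j))‖ ≤ N * (L * 2 * dist x y) := by
    refine (norm_sum_le_of_le _ (f := fun j => gradK (x i - x j) - gradK (y i - y j))
      (n := fun _ => L * 2 * dist x y) fun j _ => ?_).trans ?_
    · refine (hlip.norm_sub_le _ _).trans ?_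
      rw [mul_assoc]
      gcongr
      calc _ = ‖(x i - y i) - (x j - y j)‖ := by congr 1; abel
        _ ≤ ‖x i - y i‖ + ‖x j - y j‖ := norm_sub_le _ _
        _ ≤ dist x y + dist x y := by
          rw [← dist_eq_norm, ← dist_eq_norm]
          exact add_le_add (dist_le_pi_dist x y i) (dist_le_pi_dist x y j)
        _ = _ := by ring
    · rw [Finset.sum_const, nsmul_eq_mul]
      gcongr
      exact (Finset.card_le_univ _).trans (by simp)
  calc _ ≤ 1 / (N:ℝ) * (N * (L * 2 * dist x y)) := by gcongr
    _ = _ := by push_cast; field_simp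

/-- **Zero-inertia limit of the second-order aggregation particle model.**
With `∇K` bounded and Lipschitz, let `x` solve the first-order system
`dxᵢ/dt = γᵢ(x)` on `[0,T]` with `x 0 = x⁰`, and for each `ε > 0` let
`(xε ε, vε ε)` solve `dxᵢ/dt = vᵢ`, `ε dvᵢ/dt = -vᵢ + γᵢ(x)` with initial data
`(x⁰, v⁰)`. Then `xε ε t → x t` for all `t ∈ [0,T]` and
`vε ε t → γ(x t)` for all `t ∈ (0,T]`, as `ε → 0⁺`. -/
theorem zero_inertia_limit_particle_model
    (d N : ℕ) (hN : 0 < N)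
    (gradK : EuclideanSpace ℝ (Fin d) → EuclideanSpace ℝ (Fin d))
    (M : ℝ) (L : NNReal)
    (hbound : ∀ z, ‖gradK z‖ ≤ M)
    (hlip : LipschitzWith L gradK)
    (T : ℝ) (hT : 0 < T)
    (x₀ v₀ : Fin N → EuclideanSpace ℝ (Fin d))
    (x : ℝ → Fin N → EuclideanSpace ℝ (Fin d))
    (hx0 : x 0 = x₀)
    (hx : ∀ i, ∀ t ∈ Icc (0:ℝ) T,
      HasDerivAt (fun s => x s i) (aggVelocity gradK (x t) i) t)
    (xε vε : ℝ → ℝ → Fin N → EuclideanSpace ℝ (Fin d))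
    (hxε0 : ∀ ε > (0:ℝ), xε ε 0 = x₀)
    (hvε0 : ∀ ε > (0:ℝ), vε ε 0 = v₀)
    (hxε : ∀ ε > (0:ℝ), ∀ i, ∀ t ∈ Icc (0:ℝ) T,
      HasDerivAt (fun s => xε ε s i) (vε ε t i) t)
    (hvε : ∀ ε > (0:ℝ), ∀ i, ∀ t ∈ Icc (0:ℝ) T,
      HasDerivAt (fun s => vε ε s i)
        (ε⁻¹ • (-(vε ε t i) + aggVelocity gradK (xε ε t) i)) t) :
    (∀ t ∈ Icc (0:ℝ) T,
      Tendsto (fun ε => xε ε t) (𝓝[>] (0:ℝ)) (𝓝 (x t))) ∧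
    (∀ t ∈ Ioc (0:ℝ) T,
      Tendsto (fun ε => vε ε t) (𝓝[>] (0:ℝ)) (𝓝 (fun i => aggVelocity gradK (x t) i))) := by
  exact zero_inertia_abstract (aggVelocity gradK) M (L * 2)
    (aggVelocity_bound hN gradK M hbound) (aggVelocity_lipschitz hN gradK L hlip) T hT.le
    x₀ v₀ x hx0 (fun t ht => hasDerivAt_pi.2 fun i => hx i t ht) xε vε hxε0 hvε0
    (fun ε hε t ht => hasDerivAt_pi.2 fun i => hxε ε hε i t ht)
    (fun ε hε t ht => hasDerivAt_pi.2 fun i => hvε ε hε i t ht)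
end

section
/- Let E : [0,T] × ℝ^d → ℝ^d be bounded and Lipschitz continuous (jointly in (t,x)). Let x : [0,T] → ℝ^d solve dx/dt = −E(t,x), x(0) = x₀. For each ε > 0 let (x_ε, v_ε) : [0,T] → ℝ^d × ℝ^d solve dx/dt = v, ε dv/dt = −v − E(t,x), with (x_ε(0), v_ε(0)) = (x₀, v₀). Then as ε → 0, x_ε converges to x uniformly on [0,T], and v_ε(t) → −E(t, x(t)) for every t ∈ (0,T]. -/
open Set Filter Topology

theorem relax_bound {V : Type*} [NormedAddCommGroup V] [NormedSpace ℝ V]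
    (e t a K : ℝ) (he : 0 < e) (ht : 0 ≤ t) (ha : 0 ≤ a) (hK : 0 ≤ K)
    (v g : ℝ → V) (c : V)
    (hv : ∀ s ∈ Icc (0:ℝ) t, HasDerivAt v (e⁻¹ • (-(v s) - g s)) s)
    (hg : ∀ s ∈ Icc (0:ℝ) t, ‖c - g s‖ ≤ a + K * (t - s)) :
    ‖v t + c‖ ≤ ‖v 0 + c‖ * Real.exp (-(t / e)) + (a + K * e) := by
  have hexp : ∀ s : ℝ, HasDerivAt (fun s => Real.exp (s / e)) (Real.exp (s / e) * (1 / e)) s :=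
    fun s => ((hasDerivAt_id s).div_const e).exp
  have hu : ∀ s ∈ Icc (0:ℝ) t, HasDerivAt (fun s => Real.exp (s / e) • (v s + c))
      ((Real.exp (s / e) / e) • (c - g s)) s := by
    intro s hs
    have h := (hexp s).smul ((hv s hs).add_const c)
    refine h.congr_deriv ?_
    module
  have key := image_norm_le_of_norm_deriv_right_le_deriv_boundary
    (f := fun s => Real.exp (s / e) • (v s + c)) (a := 0) (b := t)
    (f' := fun s => (Real.exp (s / e) / e) • (c - g s))
    (B := fun s => Real.exp (s / e) * (a + K * (t - s + e)) + ‖v 0 + c‖)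
    (B' := fun s => (Real.exp (s / e) / e) * (a + K * (t - s)))
    (fun s hs => (hu s hs).continuousAt.continuousWithinAt)
    (fun s hs => (hu s ⟨hs.1, hs.2.le⟩).hasDerivWithinAt)
    (by
      have : 0 ≤ a + K * (t + e) := by positivity
      simpa using this)
    (by
      intro s
      have h1 : HasDerivAt (fun s : ℝ => a + K * (t - s + e)) (K * (-1)) s :=
        ((((hasDerivAt_id s).const_sub t).add_const e).const_mul K).const_add a
      refine (((hexp s).mul h1).add_const _).congr_deriv ?_
      field_simp
      ring)
    (by
      intro s hs
      rw [norm_smul, Real.norm_of_nonneg (by positivity)]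
      exact mul_le_mul_of_nonneg_left (hg s ⟨hs.1, hs.2.le⟩) (by positivity))
    (right_mem_Icc.2 ht)
  simp only [norm_smul, Real.norm_eq_abs, Real.abs_exp] at key
  have hm : Real.exp (-(t / e)) * Real.exp (t / e) = 1 := by
    rw [← Real.exp_add]; simp
  have h2 := mul_le_mul_of_nonneg_left key (Real.exp_pos (-(t / e))).le
  have e1 : Real.exp (-(t / e)) * (Real.exp (t / e) * ‖v t + c‖) = ‖v t + c‖ := by
    rw [← mul_assoc, hm, one_mul]
  have e2 : Real.exp (-(t / e)) * (Real.exp (t / e) * (a + K * (t - t + e)) + ‖v 0 + c‖)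
      = ‖v 0 + c‖ * Real.exp (-(t / e)) + (a + K * e) := by
    rw [mul_add, ← mul_assoc, hm]; ring
  rwa [e1, e2] at h2

/-- **Zero-inertia (Tikhonov) limit for the relaxation system.**
Let `E : [0,T] × ℝ^d → ℝ^d` be bounded and (jointly) Lipschitz. Let `x` solve
`dx/dt = -E(t,x)`, `x 0 = x₀`, and for each `ε > 0` let `(xε ε, vε ε)` solve
`dx/dt = v`, `ε dv/dt = -v - E(t,x)` with initial data `(x₀, v₀)`. Then as
`ε → 0⁺`, `xε ε → x` uniformly on `[0,T]` and `vε ε t → -E(t, x t)` for every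
`t ∈ (0,T]`. -/
theorem zero_inertia_limit_relaxation
    (d : ℕ) (T : ℝ) (hT : 0 < T)
    (Efield : ℝ → EuclideanSpace ℝ (Fin d) → EuclideanSpace ℝ (Fin d))
    (M : ℝ) (L : NNReal)
    (hbound : ∀ t xx, ‖Efield t xx‖ ≤ M)
    (hlip : LipschitzWith L (fun p : ℝ × EuclideanSpace ℝ (Fin d) => Efield p.1 p.2))
    (x₀ v₀ : EuclideanSpace ℝ (Fin d))
    (x : ℝ → EuclideanSpace ℝ (Fin d))
    (hx0 : x 0 = x₀)
    (hx : ∀ t ∈ Icc (0:ℝ) T, HasDerivAt x (-Efield t (x t)) t)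
    (xε vε : ℝ → ℝ → EuclideanSpace ℝ (Fin d))
    (hxε0 : ∀ ε > (0:ℝ), xε ε 0 = x₀)
    (hvε0 : ∀ ε > (0:ℝ), vε ε 0 = v₀)
    (hxε : ∀ ε > (0:ℝ), ∀ t ∈ Icc (0:ℝ) T, HasDerivAt (xε ε) (vε ε t) t)
    (hvε : ∀ ε > (0:ℝ), ∀ t ∈ Icc (0:ℝ) T,
      HasDerivAt (vε ε) (ε⁻¹ • (-(vε ε t) - Efield t (xε ε t))) t) :
    TendstoUniformlyOn (fun ε t => xε ε t) x (𝓝[>] (0:ℝ)) (Icc 0 T) ∧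
    ∀ t ∈ Ioc (0:ℝ) T,
      Tendsto (fun ε => vε ε t) (𝓝[>] (0:ℝ)) (𝓝 (-Efield t (x t))) := by
  have hM : 0 ≤ M := (norm_nonneg _).trans (hbound 0 0)
  obtain ⟨C, hC⟩ : ∃ C, C = ‖v₀‖ + M := ⟨_, rfl⟩
  have hC0 : 0 ≤ C := by rw [hC]; positivity
  have hlip2 : ∀ s t y z, ‖Efield s y - Efield t z‖ ≤ L * (|s - t| + ‖y - z‖) := by
    intro s t y z
    have h := hlip.dist_le_mul (s, y) (t, z)
    rw [dist_eq_norm, Prod.dist_eq] at h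
    refine h.trans (mul_le_mul_of_nonneg_left ?_ L.2)
    rw [← Real.dist_eq, ← dist_eq_norm]
    exact max_le_add_of_nonneg dist_nonneg dist_nonneg
  -- velocity bound
  have hvb : ∀ ε > (0:ℝ), ∀ t ∈ Icc (0:ℝ) T, ‖vε ε t‖ ≤ C := by
    intro ε hε t ht
    have h := relax_bound ε t M 0 hε ht.1 hM le_rfl (vε ε) (fun s => Efield s (xε ε s)) 0
      (fun s hs => hvε ε hε s ⟨hs.1, hs.2.trans ht.2⟩)
      (fun s _ => by simpa using hbound s (xε ε s))
    rw [hvε0 ε hε] at h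
    simp only [add_zero, zero_mul] at h
    have h1 : Real.exp (-(t / ε)) ≤ 1 :=
      Real.exp_le_one_iff.2 (neg_nonpos.2 (div_nonneg ht.1 hε.le))
    have := mul_le_mul_of_nonneg_left h1 (norm_nonneg v₀)
    linarith
  obtain ⟨k, hk⟩ : ∃ k : ℝ, k = L + 1 := ⟨_, rfl⟩
  have hL0 : (0:ℝ) ≤ L := L.2
  have hk0 : 0 < k := by linarith
  obtain ⟨D, hD⟩ : ∃ D : ℝ, D = C * (2 * Real.exp (k * T) + 1) := ⟨_, rfl⟩
  have hxb : ∀ ε > (0:ℝ), ∀ t ∈ Icc (0:ℝ) T, ‖xε ε t - x t‖ ≤ ε * D := by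
    intro ε hε t ht
    have hz : ∀ s ∈ Icc (0:ℝ) T, HasDerivAt (fun s => xε ε s + ε • vε ε s - x s)
        (Efield s (x s) - Efield s (xε ε s)) s := by
      intro s hs
      refine (((hxε ε hε s hs).add ((hvε ε hε s hs).const_smul ε)).sub (hx s hs)).congr_deriv ?_
      rw [smul_smul, mul_inv_cancel₀ hε.ne', one_smul]
      abel
    have hev : ∀ s ∈ Icc (0:ℝ) T, ‖ε • vε ε s‖ ≤ ε * C := by
      intro s hs
      rw [norm_smul, Real.norm_of_nonneg hε.le]
      exact mul_le_mul_of_nonneg_left (hvb ε hε s hs) hε.le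
    have hd : ∀ s ∈ Icc (0:ℝ) T, ‖xε ε s - x s‖ ≤ ‖xε ε s + ε • vε ε s - x s‖ + ε * C := by
      intro s hs
      have : xε ε s - x s = (xε ε s + ε • vε ε s - x s) - ε • vε ε s := by abel
      rw [this]
      exact (norm_sub_le _ _).trans (by simpa using hev s hs)
    have hεC : 0 ≤ ε * C := by positivity
    have key := norm_le_gronwallBound_of_norm_deriv_right_le
      (f := fun s => xε ε s + ε • vε ε s - x s)
      (f' := fun s => Efield s (x s) - Efield s (xε ε s)) (a := 0) (b := T)
      (δ := ε * C) (K := k) (ε := k * (ε * C))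
      (fun s hs => (hz s hs).continuousAt.continuousWithinAt)
      (fun s hs => (hz s ⟨hs.1, hs.2.le⟩).hasDerivWithinAt)
      (by
        have h0 := hev 0 (left_mem_Icc.2 hT.le)
        simpa only [hxε0 ε hε, hx0, add_sub_cancel_left] using h0)
      (by
        intro s hs
        have h1 := hlip2 s s (x s) (xε ε s)
        rw [sub_self, abs_zero, zero_add, norm_sub_rev (x s)] at h1
        have h2 := hd s ⟨hs.1, hs.2.le⟩
        have h3 : (L:ℝ) * ‖xε ε s - x s‖ ≤ k * (‖xε ε s + ε • vε ε s - x s‖ + ε * C) :=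
          mul_le_mul (by linarith) h2 (norm_nonneg _) hk0.le
        linarith)
      t ht
    rw [gronwallBound_of_K_ne_0 hk0.ne'] at key
    have h1 := hd t ht
    have h2 : Real.exp (k * (t - 0)) ≤ Real.exp (k * T) := by
      apply Real.exp_le_exp.2
      exact mul_le_mul_of_nonneg_left (by linarith [ht.2]) hk0.le
    have h3 := mul_le_mul_of_nonneg_left h2 hεC
    rw [mul_div_cancel_left₀ _ hk0.ne'] at key
    dsimp only at key
    have h4 : ε * D = 2 * (ε * C * Real.exp (k * T)) + ε * C := by rw [hD]; ring
    rw [h4]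
    linarith
  have hid : Tendsto (fun ε : ℝ => ε) (𝓝[>] (0:ℝ)) (𝓝 0) := tendsto_nhdsWithin_of_tendsto_nhds tendsto_id
  refine ⟨?_, ?_⟩
  · rw [Metric.tendstoUniformlyOn_iff]
    intro η hη
    have hl : Tendsto (fun ε : ℝ => ε * D) (𝓝[>] (0:ℝ)) (𝓝 0) := by
      simpa using hid.mul_const D
    filter_upwards [hl.eventually (gt_mem_nhds hη), self_mem_nhdsWithin] with ε h1 h2 t ht
    rw [dist_comm, dist_eq_norm]
    exact (hxb ε h2 t ht).trans_lt h1
  · intro t ht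
    have htT : t ∈ Icc (0:ℝ) T := ⟨ht.1.le, ht.2⟩
    have hmain : ∀ ε > (0:ℝ), ‖vε ε t - -Efield t (x t)‖ ≤
        C * Real.exp (-(t / ε)) + (0 + L * (1 + C) * ε) + L * (ε * D) := by
      intro ε hε
      have hxl : ∀ s ∈ Icc (0:ℝ) t, ‖xε ε t - xε ε s‖ ≤ C * (t - s) := by
        intro s hs
        have h := (convex_Icc (0:ℝ) T).norm_image_sub_le_of_norm_hasDerivWithin_le
          (f := xε ε) (f' := vε ε) (C := C) (x := s) (y := t)
          (fun r hr => (hxε ε hε r hr).hasDerivWithinAt) (fun r hr => hvb ε hε r hr)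
          ⟨hs.1, hs.2.trans ht.2⟩ htT
        rwa [Real.norm_of_nonneg (sub_nonneg.2 hs.2)] at h
      have h := relax_bound ε t 0 (L * (1 + C)) hε ht.1.le le_rfl (by positivity) (vε ε)
        (fun s => Efield s (xε ε s)) (Efield t (xε ε t))
        (fun s hs => hvε ε hε s ⟨hs.1, hs.2.trans ht.2⟩)
        (fun s hs => by
          have h1 := hlip2 t s (xε ε t) (xε ε s)
          rw [abs_of_nonneg (sub_nonneg.2 hs.2)] at h1
          have h2 := mul_le_mul_of_nonneg_left (hxl s hs) hL0
          linarith)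
      have h0 : ‖vε ε 0 + Efield t (xε ε t)‖ ≤ C := by
        rw [hvε0 ε hε, hC]
        exact (norm_add_le _ _).trans (by linarith [hbound t (xε ε t)])
      have h3 := mul_le_mul_of_nonneg_right h0 (Real.exp_pos (-(t / ε))).le
      have h4 := hlip2 t t (x t) (xε ε t)
      rw [sub_self, abs_zero, zero_add, norm_sub_rev (x t)] at h4
      have h5 := mul_le_mul_of_nonneg_left (hxb ε hε t htT) hL0
      have h6 : vε ε t - -Efield t (x t) =
          (vε ε t + Efield t (xε ε t)) + (Efield t (x t) - Efield t (xε ε t)) := by abel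
      rw [h6]
      refine (norm_add_le _ _).trans ?_
      linarith
    rw [tendsto_iff_norm_sub_tendsto_zero]
    have hex : Tendsto (fun ε : ℝ => Real.exp (-(t / ε))) (𝓝[>] (0:ℝ)) (𝓝 0) := by
      apply Real.tendsto_exp_neg_atTop_nhds_zero.comp
      exact tendsto_inv_nhdsGT_zero.const_mul_atTop ht.1
    have hl : Tendsto (fun ε : ℝ => C * Real.exp (-(t / ε)) + (0 + L * (1 + C) * ε) + L * (ε * D))
        (𝓝[>] (0:ℝ)) (𝓝 0) := by
      have := ((hex.const_mul C).add ((hid.const_mul (L * (1 + C))).const_add 0)).add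
        ((hid.mul_const D).const_mul (L:ℝ))
      simpa using this
    refine squeeze_zero' (Eventually.of_forall fun _ => norm_nonneg _) ?_ hl
    filter_upwards [self_mem_nhdsWithin] with ε hε using hmain ε hε
end

section
/- Assume ∇K ∈ W^{1,∞}(ℝ^d) and let f₀ be a Borel probability measure on ℝ^d × ℝ^d supported in the ball B_{R₀} of ℝ^{2d}. Let T > 0, ε > 0, and let f : [0,T] → P(ℝ^d × ℝ^d) be a measure solution of the kinetic aggregation equation with inertia parameter ε and initial datum f₀. Then, with V = max(R₀, ‖∇K‖_{L^∞}), the support of f(t) is contained in the ball of radius R(T) = R₀ + V(1 + T) in ℝ^{2d} for all t ∈ [0,T]; in particular the support bound depends only on R₀, ‖∇K‖_{L^∞} and T, and not on ε. -/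
open Set Filter Topology MeasureTheory

/-- The interaction field `(∇K ∗ μ)(x) = ∫ ∇K(x - y) dμ(y)` generated by a
measure `μ` on `ℝ^d` (here `gradK` plays the role of `∇K`). -/
noncomputable def interactionField {d : ℕ}
    (gradK : EuclideanSpace ℝ (Fin d) → EuclideanSpace ℝ (Fin d))
    (μ : Measure (EuclideanSpace ℝ (Fin d))) (x : EuclideanSpace ℝ (Fin d)) :
    EuclideanSpace ℝ (Fin d) :=
  ∫ y, gradK (x - y) ∂μ

/-- `f : [0,T] → P(ℝ^d × ℝ^d)` is a measure solution of the kinetic aggregation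
equation `∂ₜ f + v·∇ₓ f = (1/ε) ∇_v·((v + ∇K ∗ ρ) f)` with inertia parameter `ε`
and initial datum `f₀`, in the mass-transportation sense: `f t` is the
push-forward of `f₀` under the flow map `Φ t` of the characteristic system
`dx/dt = v`, `ε dv/dt = -v - (∇K ∗ ρ)(t,x)`, where `ρ t` is the first marginal
of `f t`. -/
def IsKineticMeasureSolution {d : ℕ}
    (gradK : EuclideanSpace ℝ (Fin d) → EuclideanSpace ℝ (Fin d)) (ε T : ℝ)
    (f₀ : Measure (EuclideanSpace ℝ (Fin d) × EuclideanSpace ℝ (Fin d)))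
    (f : ℝ → Measure (EuclideanSpace ℝ (Fin d) × EuclideanSpace ℝ (Fin d))) : Prop :=
  ∃ Φ : ℝ → (EuclideanSpace ℝ (Fin d) × EuclideanSpace ℝ (Fin d)) →
        (EuclideanSpace ℝ (Fin d) × EuclideanSpace ℝ (Fin d)),
    (∀ t, Measurable (Φ t)) ∧
    (∀ p, Φ 0 p = p) ∧
    (∀ p, ∀ t ∈ Icc (0:ℝ) T,
      HasDerivAt (fun s => (Φ s p).1) ((Φ t p).2) t ∧
      HasDerivAt (fun s => (Φ s p).2)
        (ε⁻¹ • (-(Φ t p).2 -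
          interactionField gradK ((f t).map Prod.fst) (Φ t p).1)) t) ∧
    (∀ t ∈ Icc (0:ℝ) T, f t = f₀.map (Φ t))

/-- **Uniform-in-ε bound on the support of measure solutions.**
If `∇K` is bounded (by `M`) and Lipschitz, and `f₀` is a probability measure
supported in the Euclidean ball of radius `R₀` of `ℝ^{2d}`, then for any measure
solution `f` of the kinetic aggregation equation with inertia parameter `ε`,
the support of `f t` is contained in the ball of radius `R₀ + V(1+T)` with
`V = max R₀ M`, for all `t ∈ [0,T]`; in particular the bound does not depend
on `ε`. -/
theorem measure_solution_uniform_support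
    (d : ℕ) (T ε M R₀ : ℝ) (hT : 0 < T) (hε : 0 < ε) (hM : 0 ≤ M) (hR₀ : 0 ≤ R₀)
    (gradK : EuclideanSpace ℝ (Fin d) → EuclideanSpace ℝ (Fin d)) (L : NNReal)
    (hbound : ∀ z, ‖gradK z‖ ≤ M)
    (hlip : LipschitzWith L gradK)
    (f₀ : Measure (EuclideanSpace ℝ (Fin d) × EuclideanSpace ℝ (Fin d)))
    [IsProbabilityMeasure f₀]
    (hsupp : f₀ {p | R₀ ^ 2 < ‖p.1‖ ^ 2 + ‖p.2‖ ^ 2} = 0)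
    (f : ℝ → Measure (EuclideanSpace ℝ (Fin d) × EuclideanSpace ℝ (Fin d)))
    (hf : IsKineticMeasureSolution gradK ε T f₀ f) :
    ∀ t ∈ Icc (0:ℝ) T,
      f t {p | (R₀ + max R₀ M * (1 + T)) ^ 2 < ‖p.1‖ ^ 2 + ‖p.2‖ ^ 2} = 0 := by
  obtain ⟨Φ, hmeas, h0, hode, hpush⟩ := hf
  have hV : R₀ ≤ max R₀ M := le_max_left _ _
  have hMV : M ≤ max R₀ M := le_max_right _ _
  generalize max R₀ M = V at hV hMV
  have hV0 : 0 ≤ V := hR₀.trans hV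
  -- bound on the interaction field
  have hF : ∀ t ∈ Icc (0:ℝ) T, ∀ x,
      ‖interactionField gradK ((f t).map Prod.fst) x‖ ≤ V := by
    intro t ht x
    rw [hpush t ht]
    have : IsProbabilityMeasure (f₀.map (Φ t)) :=
      Measure.isProbabilityMeasure_map (hmeas t).aemeasurable
    have : IsProbabilityMeasure ((f₀.map (Φ t)).map Prod.fst) :=
      Measure.isProbabilityMeasure_map measurable_fst.aemeasurable
    have h := norm_integral_le_of_norm_le_const (μ := (f₀.map (Φ t)).map Prod.fst)
      (f := fun y => gradK (x - y)) (C := M) (Eventually.of_forall fun y => hbound _)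
    rw [probReal_univ, mul_one] at h
    exact h.trans hMV
  -- bound on the velocities
  have hvel : ∀ p, ‖p.2‖ ≤ V → ∀ t ∈ Icc (0:ℝ) T, ‖(Φ t p).2‖ ≤ V := by
    intro p hp t ht
    have hE : ∀ s : ℝ, HasDerivAt (fun s : ℝ => Real.exp (ε⁻¹ * s))
        (Real.exp (ε⁻¹ * s) * ε⁻¹) s := by
      intro s
      have h := ((hasDerivAt_id s).const_mul ε⁻¹).exp
      simpa using h
    have hu : ∀ s ∈ Icc (0:ℝ) T,
        HasDerivAt (fun s : ℝ => Real.exp (ε⁻¹ * s) • (Φ s p).2)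
          (-((Real.exp (ε⁻¹ * s) * ε⁻¹) •
            interactionField gradK ((f s).map Prod.fst) (Φ s p).1)) s := by
      intro s hs
      refine ((hE s).smul (hode p s hs).2).congr_deriv ?_
      module
    have key := image_norm_le_of_norm_deriv_right_le_deriv_boundary
      (f := fun s : ℝ => Real.exp (ε⁻¹ * s) • (Φ s p).2) (a := 0) (b := T)
      (B := fun s => Real.exp (ε⁻¹ * s) * V)
      (fun s hs => (hu s hs).continuousAt.continuousWithinAt)
      (fun s hs => (hu s (Ico_subset_Icc_self hs)).hasDerivWithinAt)
      (by simpa [h0] using hp)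
      (fun s => (hE s).mul_const V)
      (by
        intro s hs
        rw [norm_neg, norm_smul, Real.norm_of_nonneg (by positivity)]
        exact mul_le_mul_of_nonneg_left (hF s (Ico_subset_Icc_self hs) _) (by positivity))
      ht
    simp only [norm_smul, Real.norm_of_nonneg (Real.exp_pos _).le] at key
    exact le_of_mul_le_mul_left key (Real.exp_pos _)
  -- bound on the positions
  have hpos : ∀ p, ‖p.1‖ ≤ R₀ → ‖p.2‖ ≤ V → ∀ t ∈ Icc (0:ℝ) T,
      ‖(Φ t p).1‖ ≤ R₀ + V * t := by
    intro p hp1 hp2 t ht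
    exact image_norm_le_of_norm_deriv_right_le_deriv_boundary
      (f := fun s : ℝ => (Φ s p).1) (a := 0) (b := T)
      (B := fun s => R₀ + V * s) (B' := fun _ => V)
      (fun s hs => (hode p s hs).1.continuousAt.continuousWithinAt)
      (fun s hs => (hode p s (Ico_subset_Icc_self hs)).1.hasDerivWithinAt)
      (by simpa [h0] using hp1)
      (fun s => by simpa using ((hasDerivAt_id s).const_mul V).const_add R₀)
      (fun s hs => hvel p hp2 s (Ico_subset_Icc_self hs))
      ht
  intro t ht
  have hms : MeasurableSet {p : EuclideanSpace ℝ (Fin d) × EuclideanSpace ℝ (Fin d) |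
      (R₀ + V * (1 + T)) ^ 2 < ‖p.1‖ ^ 2 + ‖p.2‖ ^ 2} :=
    measurableSet_lt measurable_const (by fun_prop)
  rw [hpush t ht, Measure.map_apply (hmeas t) hms]
  refine measure_mono_null ?_ hsupp
  intro p hp
  simp only [mem_preimage, mem_ofPred_eq] at hp ⊢
  by_contra hcon
  push Not at hcon
  have hp1 : ‖p.1‖ ≤ R₀ := abs_le_of_sq_le_sq' (by nlinarith [sq_nonneg ‖p.2‖]) hR₀ |>.2
  have hp2 : ‖p.2‖ ≤ R₀ := abs_le_of_sq_le_sq' (by nlinarith [sq_nonneg ‖p.1‖]) hR₀ |>.2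
  have h1 := hpos p hp1 (hp2.trans hV) t ht
  have h2 := hvel p (hp2.trans hV) t ht
  have h3 : V * t ≤ V * T := mul_le_mul_of_nonneg_left ht.2 hV0
  have h4 : ‖(Φ t p).1‖ + ‖(Φ t p).2‖ ≤ R₀ + V * (1 + T) := by linarith
  have h5 := pow_le_pow_left₀ (by positivity) h4 2
  nlinarith [mul_nonneg (norm_nonneg (Φ t p).1) (norm_nonneg (Φ t p).2)]
end

section
/- Suppose f₀ ∈ C²(ℝ^d × ℝ^d) ∩ L¹(ℝ^d × ℝ^d) and ∇K ∈ W^{1,∞}(ℝ^d), and let T > 0 and ε > 0. Then there exists a continuously differentiable function f : [0,T] × ℝ^d × ℝ^d → ℝ with f(t,·,·) ∈ L¹(ℝ^d × ℝ^d) for each t, such that f(0,x,v) = f₀(x,v) and f satisfies pointwise the kinetic equation ∂_t f + v·∇_x f = (1/ε) ∇_v·((v + (∇K ∗ ρ)(t,x)) f), where ρ(t,x) = ∫_{ℝ^d} f(t,x,v) dv and (∇K ∗ ρ)(t,x) = ∫_{ℝ^d} ∇K(x − y) ρ(t,y) dy. -/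
open Set Filter Topology MeasureTheory

namespace KinAgg

/-- exponential bound of an integral from `0` to `t`. -/
theorem norm_integral_exp_le {B : Type*} [NormedAddCommGroup B] [NormedSpace ℝ B]
    (g : ℝ → B) (C l : ℝ) (hC : 0 ≤ C) (hl : 0 < l)
    (hg : ∀ s, ‖g s‖ ≤ C * Real.exp (l * |s|)) (t : ℝ) :
    ‖∫ s in (0:ℝ)..t, g s‖ ≤ C / l * Real.exp (l * |t|) := by
  have key : ∀ (g : ℝ → B), (∀ s, ‖g s‖ ≤ C * Real.exp (l * |s|)) → ∀ t, 0 ≤ t →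
      ‖∫ s in (0:ℝ)..t, g s‖ ≤ C / l * Real.exp (l * |t|) := by
    intro g hg t ht
    have h1 : ‖∫ s in (0:ℝ)..t, g s‖ ≤ ∫ s in (0:ℝ)..t, C * Real.exp (l * s) := by
      apply intervalIntegral.norm_integral_le_of_norm_le ht
      · refine Eventually.of_forall fun s hs => ?_
        have := hg s
        rwa [abs_of_pos hs.1] at this
      · apply Continuous.intervalIntegrable
        fun_prop
    have h2 : ∫ s in (0:ℝ)..t, C * Real.exp (l * s) =
        C / l * Real.exp (l * t) - C / l * Real.exp (l * 0) := by
      apply intervalIntegral.integral_eq_sub_of_hasDerivAt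
      · intro s _
        have : HasDerivAt (fun s => C / l * Real.exp (l * s))
            (C / l * (Real.exp (l * s) * (l * 1))) s :=
          (((hasDerivAt_id s).const_mul l).exp).const_mul _
        exact this.congr_deriv (by field_simp)
      · apply Continuous.intervalIntegrable
        fun_prop
    rw [abs_of_nonneg ht]
    have : 0 ≤ C / l * Real.exp (l * 0) := by positivity
    linarith
  rcases le_total 0 t with ht | ht
  · exact key g hg t ht
  · have h := key (fun s => g (-s)) (fun s => by simpa using hg (-s)) (-t) (by linarith)
    rw [intervalIntegral.integral_comp_neg, neg_neg, neg_zero, intervalIntegral.integral_symm,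
      norm_neg, abs_neg] at h
    exact h

/-- Global existence for (nonlocal) ODEs depending on a parameter. -/
theorem exists_flow {P B : Type*} [TopologicalSpace P]
    [FirstCountableTopology P]
    [NormedAddCommGroup B] [NormedSpace ℝ B] [CompleteSpace B]
    (y₀ : P → B) (hy₀ : Continuous y₀) (H : (ℝ × P → B) → ℝ × P → B) (K A : ℝ)
    (hK : 0 ≤ K)
    (hc : ∀ y, Continuous y → Continuous (H y))
    (hA : ∀ s p, ‖H (fun q => y₀ q.2) (s, p)‖ ≤ A)
    (hL : ∀ y y', Continuous y → Continuous y' → ∀ s C,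
      (∀ p, ‖y (s, p) - y' (s, p)‖ ≤ C) → ∀ p, ‖H y (s, p) - H y' (s, p)‖ ≤ K * C) :
    ∃ y : ℝ × P → B, Continuous y ∧ (∀ p, y (0, p) = y₀ p) ∧
      ∀ t p, HasDerivAt (fun s => y (s, p)) (H y (t, p)) t := by
  set l : ℝ := 2 * K + 1 with hl
  have hl0 : 0 < l := by positivity
  let Y : (BoundedContinuousFunction (ℝ × P) B) → ℝ × P → B :=
    fun u q => y₀ q.2 + Real.exp (l * |q.1|) • u q
  have hY : ∀ u, Continuous (Y u) := fun u => by
    have := u.continuous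
    fun_prop
  have hY0c : Continuous (fun q : ℝ × P => y₀ q.2) := by fun_prop
  have hHb : ∀ u s p, ‖H (Y u) (s, p)‖ ≤ (|A| + K * ‖u‖) * Real.exp (l * |s|) := by
    intro u s p
    have h1 := hL (Y u) (fun q => y₀ q.2) (hY u) hY0c s (Real.exp (l * |s|) * ‖u‖)
      (fun p => by
        simp only [Y, add_sub_cancel_left, norm_smul, Real.norm_eq_abs, Real.abs_exp]
        gcongr
        exact u.norm_coe_le_norm _) p
    have h2 := hA s p
    have h3 : ‖H (Y u) (s, p)‖ ≤ ‖H (Y u) (s, p) - H (fun q => y₀ q.2) (s, p)‖ +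
      ‖H (fun q => y₀ q.2) (s, p)‖ := by
      simpa using norm_add_le (H (Y u) (s, p) - H (fun q => y₀ q.2) (s, p))
        (H (fun q => y₀ q.2) (s, p))
    have h4 : 1 ≤ Real.exp (l * |s|) := Real.one_le_exp (by positivity)
    have h5 : A ≤ |A| := le_abs_self A
    nlinarith [abs_nonneg A]
  have hGc : ∀ u, Continuous (fun q : ℝ × P => ∫ s in (0:ℝ)..q.1, H (Y u) (s, q.2)) := by
    intro u
    apply intervalIntegral.continuous_parametric_intervalIntegral_of_continuous
      (f := fun (q : ℝ × P) s => H (Y u) (s, q.2)) _ continuous_fst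
    have := hc _ (hY u)
    simp only [Function.uncurry_def]
    fun_prop
  let G : (BoundedContinuousFunction (ℝ × P) B) → (BoundedContinuousFunction (ℝ × P) B) :=
    fun u => BoundedContinuousFunction.ofNormedAddCommGroup
      (fun q => Real.exp (-(l * |q.1|)) • ∫ s in (0:ℝ)..q.1, H (Y u) (s, q.2))
      (by have := hGc u; fun_prop) ((|A| + K * ‖u‖) / l) (by
        intro q
        have := norm_integral_exp_le (fun s => H (Y u) (s, q.2)) (|A| + K * ‖u‖) l
          (by positivity) hl0 (fun s => hHb u s q.2) q.1
        rw [norm_smul, Real.norm_eq_abs, Real.abs_exp]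
        calc _ ≤ Real.exp (-(l * |q.1|)) * ((|A| + K * ‖u‖) / l * Real.exp (l * |q.1|)) := by
              gcongr
          _ = (|A| + K * ‖u‖) / l * (Real.exp (-(l * |q.1|)) * Real.exp (l * |q.1|)) := by ring
          _ = _ := by rw [← Real.exp_add]; simp)
  have hGdef : ∀ u q, G u q = Real.exp (-(l * |q.1|)) • ∫ s in (0:ℝ)..q.1, H (Y u) (s, q.2) :=
    fun u q => rfl
  have hInt : ∀ u p a b, IntervalIntegrable (fun s => H (Y u) (s, p)) volume a b := by
    intro u p a b
    apply Continuous.intervalIntegrable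
    have := hc _ (hY u)
    fun_prop
  have hcontr : ContractingWith (1/2 : NNReal) G := by
    refine ⟨by rw [← NNReal.coe_lt_coe]; norm_num, LipschitzWith.of_dist_le_mul fun u w => ?_⟩
    rw [BoundedContinuousFunction.dist_le (by positivity)]
    intro q
    rw [hGdef, hGdef, dist_eq_norm, ← smul_sub, ← intervalIntegral.integral_sub (hInt _ _ _ _)
      (hInt _ _ _ _), norm_smul, Real.norm_eq_abs, Real.abs_exp]
    have := norm_integral_exp_le (fun s => H (Y u) (s, q.2) - H (Y w) (s, q.2))
      (K * dist u w) l (by positivity) hl0 (fun s => by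
        have := hL (Y u) (Y w) (hY u) (hY w) s (Real.exp (l * |s|) * dist u w)
          (fun p => by
            simp only [Y, add_sub_add_left_eq_sub, ← smul_sub, norm_smul, Real.norm_eq_abs,
              Real.abs_exp]
            gcongr
            rw [← dist_eq_norm]
            exact BoundedContinuousFunction.dist_coe_le_dist _) q.2
        calc _ ≤ _ := this
          _ = _ := by ring) q.1
    calc _ ≤ Real.exp (-(l * |q.1|)) * (K * dist u w / l * Real.exp (l * |q.1|)) := by
              gcongr
      _ = (K / l) * dist u w * (Real.exp (-(l * |q.1|)) * Real.exp (l * |q.1|)) := by ring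
      _ = (K / l) * dist u w := by rw [← Real.exp_add]; simp
      _ ≤ _ := by
        gcongr
        rw [div_le_iff₀ hl0]
        simp [hl]
        linarith
  obtain ⟨u, hu, -⟩ := hcontr.exists_fixedPoint 0 (edist_ne_top _ _)
  have hYu : ∀ q, Y u q = y₀ q.2 + ∫ s in (0:ℝ)..q.1, H (Y u) (s, q.2) := by
    intro q
    have h1 : u q = Real.exp (-(l * |q.1|)) • ∫ s in (0:ℝ)..q.1, H (Y u) (s, q.2) := by
      rw [← hGdef, hu.eq]
    simp only [Y] at h1 ⊢
    nth_rewrite 1 [h1]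
    rw [smul_smul, ← Real.exp_add]
    simp
  refine ⟨Y u, hY u, fun p => by rw [hYu]; simp, fun t p => ?_⟩
  have h2 : (fun s => Y u (s, p)) = fun t => y₀ p + ∫ s in (0:ℝ)..t, H (Y u) (s, p) := by
    ext s
    exact hYu (s, p)
  rw [h2]
  apply HasDerivAt.const_add
  have hcc : Continuous (fun s => H (Y u) (s, p)) := by
    have := hc _ (hY u)
    fun_prop
  exact intervalIntegral.integral_hasDerivAt_right (hInt _ _ _ _)
    hcc.aestronglyMeasurable.stronglyMeasurableAtFilter hcc.continuousAt

/-- Hadamard form implies `C¹`. -/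
theorem hadamard_hasFDerivAt {V W : Type*} [NormedAddCommGroup V] [NormedSpace ℝ V]
    [NormedAddCommGroup W] [NormedSpace ℝ W] (g : V → W) (N : V × V → V →L[ℝ] W)
    (hN : Continuous N) (h : ∀ p p', g p' - g p = N (p, p') (p' - p)) (p : V) :
    HasFDerivAt g (N (p, p)) p := by
  rw [hasFDerivAt_iff_isLittleO]
  rw [Asymptotics.isLittleO_iff]
  intro c hc
  have h1 : ContinuousAt (fun p' => N (p, p')) p := by fun_prop
  have h2 := Metric.continuousAt_iff'.1 h1 c hc
  filter_upwards [h2] with p' hp'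
  rw [h, ← sub_apply]
  refine (ContinuousLinearMap.le_opNorm _ _).trans ?_
  rw [dist_eq_norm] at hp'
  gcongr

theorem hadamard_contDiff {V W : Type*} [NormedAddCommGroup V] [NormedSpace ℝ V]
    [NormedAddCommGroup W] [NormedSpace ℝ W] (g : V → W) (N : V × V → V →L[ℝ] W)
    (hN : Continuous N) (h : ∀ p p', g p' - g p = N (p, p') (p' - p)) :
    ContDiff ℝ 1 g := by
  rw [contDiff_one_iff_hasFDerivAt]
  exact ⟨fun p => N (p, p), by fun_prop, hadamard_hasFDerivAt g N hN h⟩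

/-- A `C¹` function (in the space variable) in Hadamard form. -/
theorem hadamard_of_deriv {S V W : Type*} [TopologicalSpace S] [FirstCountableTopology S]
    [NormedAddCommGroup V] [NormedSpace ℝ V]
    [NormedAddCommGroup W] [NormedSpace ℝ W] [CompleteSpace W] (F : S × V → W)
    (DF : S × V → V →L[ℝ] W) (hDF : Continuous DF)
    (hF : ∀ s x, HasFDerivAt (fun x => F (s, x)) (DF (s, x)) x) (C : ℝ)
    (hC : ∀ q, ‖DF q‖ ≤ C) :
    ∃ N : S × V × V → V →L[ℝ] W, Continuous N ∧ (∀ q, ‖N q‖ ≤ C) ∧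
      ∀ s x x', F (s, x') - F (s, x) = N (s, x, x') (x' - x) := by
  refine ⟨fun q => ∫ r in (0:ℝ)..1, DF (q.1, q.2.1 + r • (q.2.2 - q.2.1)), ?_, ?_, ?_⟩
  · apply intervalIntegral.continuous_parametric_intervalIntegral_of_continuous'
    simp only [Function.uncurry_def]
    fun_prop
  · intro q
    have := intervalIntegral.norm_integral_le_of_norm_le_const (a := 0) (b := 1) (C := C)
      (f := fun r : ℝ => DF (q.1, q.2.1 + r • (q.2.2 - q.2.1))) (fun r _ => hC _)
    simpa using this
  · intro s x x'
    have hcont : Continuous fun r : ℝ => DF (s, x + r • (x' - x)) := by fun_prop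
    simp only
    rw [ContinuousLinearMap.intervalIntegral_apply (hcont.intervalIntegrable _ _)]
    symm
    have := intervalIntegral.integral_eq_sub_of_hasDerivAt (a := 0) (b := 1)
      (f := fun r : ℝ => F (s, x + r • (x' - x)))
      (f' := fun r : ℝ => DF (s, x + r • (x' - x)) (x' - x)) (fun r _ => by
        have h1 : HasDerivAt (fun r : ℝ => x + r • (x' - x)) (x' - x) r := by
          simpa using ((hasDerivAt_id r).smul_const (x' - x)).const_add x
        exact (hF s (x + r • (x' - x))).comp_hasDerivAt r h1) (by
          apply Continuous.intervalIntegrable; fun_prop)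
    simpa using this

theorem continuous_integral_comp {S Z W : Type*} [TopologicalSpace S] [FirstCountableTopology S]
    [WeaklyLocallyCompactSpace S] [NormedAddCommGroup Z] [ProperSpace Z]
    [MeasurableSpace Z] [BorelSpace Z] (μ : Measure Z) [μ.Regular]
    [NormedAddCommGroup W] [NormedSpace ℝ W]
    (θ σ : S × Z → Z) (hθ : Continuous θ) (hσ : Continuous σ)
    (hσθ : ∀ s z, σ (s, θ (s, z)) = z)
    (hmp : ∀ s, MeasurePreserving (fun z => θ (s, z)) μ μ)
    (D : Z → W) (hD : AEStronglyMeasurable D μ) (C : ℝ) (hC : ∀ z, ‖D z‖ ≤ C)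
    (f : Z → ℝ) (hf : Integrable f μ) :
    Continuous fun s => ∫ z, f (θ (s, z)) • D z ∂μ := by
  have hC0 : 0 ≤ C := (norm_nonneg _).trans (hC 0)
  have hInt : ∀ g : Z → ℝ, Integrable g μ → ∀ s,
      Integrable (fun z => g (θ (s, z)) • D z) μ := by
    intro g hg s
    have h1 : Integrable (fun z => g (θ (s, z))) μ := (hmp s).integrable_comp_of_integrable hg
    refine (h1.norm.mul_const C).mono' (h1.aestronglyMeasurable.smul hD) ?_
    refine Eventually.of_forall fun z => ?_
    rw [norm_smul]
    gcongr
    exact hC z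
  apply continuous_of_uniform_approx_of_continuous
  intro u hu
  obtain ⟨δ, hδ, hδu⟩ := Metric.mem_uniformity_dist.1 hu
  obtain ⟨g, hgs, hgi, hgc, hgint⟩ :=
    hf.exists_hasCompactSupport_integral_sub_le (ε := δ / (C + 1) / 2) (by positivity)
  refine ⟨fun s => ∫ z, g (θ (s, z)) • D z ∂μ, ?_, ?_⟩
  · rw [continuous_iff_continuousAt]
    intro s₀
    obtain ⟨Q, hQ, hQs⟩ := exists_compact_mem_nhds s₀
    obtain ⟨c, hc⟩ := hgs.exists_bound_of_continuous hgc
    have hT : IsCompact (σ '' (Q ×ˢ tsupport g)) := (hQ.prod hgs.isCompact).image hσ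
    refine continuousAt_of_dominated
      (bound := (σ '' (Q ×ˢ tsupport g)).indicator fun _ => c * C) ?_ ?_ ?_ ?_
    · exact Eventually.of_forall fun s => (hInt g hgint s).aestronglyMeasurable
    · filter_upwards [hQs] with s hs
      refine Eventually.of_forall fun z => ?_
      by_cases hz : z ∈ σ '' (Q ×ˢ tsupport g)
      · rw [indicator_of_mem hz, norm_smul]
        have := hc (θ (s, z))
        have := hC z
        gcongr
        exact (norm_nonneg _).trans (hc z)
      · rw [indicator_of_notMem hz]
        have : θ (s, z) ∉ tsupport g := fun h => hz ⟨(s, θ (s, z)), ⟨hs, h⟩, hσθ s z⟩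
        rw [image_eq_zero_of_notMem_tsupport this]
        simp
    · rw [integrable_indicator_iff hT.measurableSet]
      exact integrableOn_const hT.measure_lt_top.ne
    · refine Eventually.of_forall fun z => Continuous.continuousAt ?_
      fun_prop
  · intro s
    apply hδu
    rw [dist_eq_norm, ← integral_sub (hInt f hf s) (hInt g hgint s)]
    have h1 : Integrable (fun z => f z - g z) μ := hf.sub hgint
    have h2 : ‖∫ z, f (θ (s, z)) • D z - g (θ (s, z)) • D z ∂μ‖ ≤
        ∫ z, ‖f (θ (s, z)) - g (θ (s, z))‖ * C ∂μ := by
      apply norm_integral_le_of_norm_le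
      · exact (((hmp s).integrable_comp_of_integrable h1).norm).mul_const C
      · refine Eventually.of_forall fun z => ?_
        rw [← sub_smul, norm_smul]
        have := hC z
        gcongr
    have h3 : ∫ z, ‖f (θ (s, z)) - g (θ (s, z))‖ ∂μ = ∫ z, ‖f z - g z‖ ∂μ := by
      have h4 := integral_map (hmp s).aemeasurable (f := fun z => ‖f z - g z‖)
        (by rw [(hmp s).map_eq]; exact h1.aestronglyMeasurable.norm)
      rw [(hmp s).map_eq] at h4
      exact h4.symm
    rw [integral_mul_const, h3] at h2
    calc _ ≤ _ := h2
      _ ≤ δ / (C + 1) / 2 * C := by gcongr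
      _ = δ * (C / (2 * (C + 1))) := by field_simp
      _ < δ * 1 := by
        gcongr
        rw [div_lt_one (by positivity)]
        linarith
      _ = δ := mul_one δ

/-- explicit Euler scheme with step `h`. -/
noncomputable def eul {Z : Type*} [NormedAddCommGroup Z] [NormedSpace ℝ Z] (b : ℝ → Z → Z) (h : ℝ) :
    ℕ → Z → Z
  | 0, z => z
  | k + 1, z => eul b h k z + h • b (k * h) (eul b h k z)

theorem eul_bound {Z : Type*} [NormedAddCommGroup Z] [NormedSpace ℝ Z] (b : ℝ → Z → Z) (h A : ℝ)
    (hb : ∀ s z, ‖b s z‖ ≤ A) (k : ℕ) (z : Z) : ‖eul b h k z - z‖ ≤ k * |h| * A := by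
  induction k with
  | zero => simp [eul]
  | succ k ih =>
    have h1 : eul b h (k + 1) z - z = (eul b h k z - z) + h • b (k * h) (eul b h k z) := by
      simp only [eul]; abel
    rw [h1]
    refine (norm_add_le _ _).trans ?_
    rw [norm_smul, Real.norm_eq_abs]
    have := mul_le_mul_of_nonneg_left (hb (k * h) (eul b h k z)) (abs_nonneg h)
    push_cast
    linarith

theorem eul_error {Z : Type*} [NormedAddCommGroup Z] [NormedSpace ℝ Z] (b : ℝ → Z → Z) (K ω t : ℝ)
    (hK : 0 ≤ K) (hω : 0 ≤ ω)
    (hL : ∀ s z z', ‖b s z - b s z'‖ ≤ K * ‖z - z'‖) (y : ℝ → Z)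
    (hy : ∀ s, HasDerivAt y (b s (y s)) s) (n : ℕ) (h : ℝ) (hn : n * |h| ≤ |t|)
    (hosc : ∀ s ∈ Icc (-|t|) |t|, ∀ s' ∈ Icc (-|t|) |t|, |s - s'| ≤ |h| →
      ‖b s (y s) - b s' (y s')‖ ≤ ω) (k : ℕ) (hk : k ≤ n) :
    ‖eul b h k (y 0) - y (k * h)‖ ≤ k * |h| * ω * Real.exp (k * |h| * K) := by
  induction k with
  | zero => simp [eul]
  | succ k ih =>
    have ih := ih (by omega)
    have hin : ∀ j : ℕ, j ≤ n → (j * h : ℝ) ∈ Icc (-|t|) |t| := by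
      intro j hj
      rw [mem_Icc, ← abs_le, abs_mul, Nat.abs_cast]
      refine le_trans ?_ hn
      gcongr
    have h0 := hin k (by omega)
    have h1 := hin (k + 1) hk
    set bk := b (k * h) (y (k * h)) with hbk
    have hmv : ‖(y ((k + 1 : ℕ) * h) - ((k + 1 : ℕ) * h : ℝ) • bk) - (y (k * h) - (k * h : ℝ) • bk)‖
        ≤ ω * ‖((k + 1 : ℕ) * h : ℝ) - k * h‖ := by
      refine (convex_uIcc (k * h : ℝ) ((k + 1 : ℕ) * h)).norm_image_sub_le_of_norm_hasDerivWithin_le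
        (f := fun s => y s - s • bk) (f' := fun s => b s (y s) - bk) ?_ ?_ left_mem_uIcc
        right_mem_uIcc
      · intro s _
        have h7 : HasDerivAt (fun s => y s - s • bk) (b s (y s) - (1:ℝ) • bk) s :=
          (hy s).sub ((hasDerivAt_id s).smul_const bk)
        rw [one_smul] at h7
        exact h7.hasDerivWithinAt
      · intro s hs
        apply hosc s _ _ h0
        · have := abs_sub_left_of_mem_uIcc hs
          have h8 : ((k + 1 : ℕ) * h : ℝ) - k * h = h := by push_cast; ring
          rwa [h8] at this
        · exact (uIcc_subset_Icc h0 h1) hs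
    have hd : ((k + 1 : ℕ) * h : ℝ) - k * h = h := by push_cast; ring
    rw [hd, Real.norm_eq_abs] at hmv
    have hdec : eul b h (k + 1) (y 0) - y ((k + 1 : ℕ) * h) =
        (eul b h k (y 0) - y (k * h)) + h • (b (k * h) (eul b h k (y 0)) - bk)
        - ((y ((k + 1 : ℕ) * h) - ((k + 1 : ℕ) * h : ℝ) • bk) - (y (k * h) - (k * h : ℝ) • bk)) := by
      have : ((k + 1 : ℕ) * h : ℝ) • bk = (k * h : ℝ) • bk + h • bk := by
        rw [← add_smul]; congr 1; push_cast; ring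
      rw [this]
      simp only [eul, smul_sub]
      abel
    have hb := mul_le_mul_of_nonneg_left (hL (k * h) (eul b h k (y 0)) (y (k * h))) (abs_nonneg h)
    have h3 : ‖eul b h (k + 1) (y 0) - y ((k + 1 : ℕ) * h)‖ ≤
        (1 + |h| * K) * ‖eul b h k (y 0) - y (k * h)‖ + ω * |h| := by
      rw [hdec]
      refine (norm_sub_le _ _).trans ?_
      have := norm_add_le (eul b h k (y 0) - y (k * h)) (h • (b (k * h) (eul b h k (y 0)) - bk))
      rw [norm_smul, Real.norm_eq_abs] at this
      linarith
    have h4 : 1 + |h| * K ≤ Real.exp (|h| * K) := by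
      have := Real.add_one_le_exp (|h| * K); linarith
    have h5 : Real.exp ((k + 1 : ℕ) * |h| * K) = Real.exp (k * |h| * K) * Real.exp (|h| * K) := by
      rw [← Real.exp_add]; congr 1; push_cast; ring
    have h6 : 1 ≤ Real.exp ((k + 1 : ℕ) * |h| * K) := Real.one_le_exp (by positivity)
    calc _ ≤ _ := h3
      _ ≤ Real.exp (|h| * K) * (k * |h| * ω * Real.exp (k * |h| * K)) + ω * |h| * 1 := by
        rw [mul_one]; gcongr
      _ ≤ Real.exp (|h| * K) * (k * |h| * ω * Real.exp (k * |h| * K)) +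
          ω * |h| * Real.exp ((k + 1 : ℕ) * |h| * K) := by gcongr
      _ = _ := by rw [h5]; push_cast; ring

theorem eul_tendsto {Z : Type*} [NormedAddCommGroup Z] [NormedSpace ℝ Z] (b : ℝ → Z → Z) (K t : ℝ)
    (hK : 0 ≤ K)
    (hL : ∀ s z z', ‖b s z - b s z'‖ ≤ K * ‖z - z'‖) (y : ℝ → Z)
    (hy : ∀ s, HasDerivAt y (b s (y s)) s) (hc : Continuous fun s => b s (y s)) :
    Tendsto (fun n : ℕ => eul b (t / (n + 1)) (n + 1) (y 0)) atTop (𝓝 (y t)) := by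
  rw [Metric.tendsto_atTop]
  intro δ hδ
  set E := |t| * Real.exp (|t| * K) + 1 with hE
  have hE0 : 0 < E := by positivity
  have huc := (isCompact_Icc (a := -|t|) (b := |t|)).uniformContinuousOn_of_continuous
    hc.continuousOn
  rw [Metric.uniformContinuousOn_iff] at huc
  obtain ⟨η, hη, hosc⟩ := huc (δ / E) (by positivity)
  obtain ⟨n₀, hn₀⟩ := exists_nat_gt (|t| / η)
  refine ⟨n₀, fun n hn => ?_⟩
  have hn1 : (0:ℝ) < n + 1 := by positivity
  have hh : |t / (n + 1)| = |t| / (n + 1) := by rw [abs_div, abs_of_pos hn1]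
  have hlt : |t / (n + 1)| < η := by
    rw [hh, div_lt_iff₀ hn1]
    rw [div_lt_iff₀ hη] at hn₀
    have : (n₀ : ℝ) ≤ n := by exact_mod_cast hn
    nlinarith
  have hmul : ((n + 1 : ℕ) : ℝ) * |t / (n + 1)| = |t| := by
    rw [hh]; push_cast; field_simp
  have := eul_error b K (δ / E) t hK (by positivity) hL y hy (n + 1) (t / (n + 1)) hmul.le
    (fun s hs s' hs' hss => by
      have := hosc s hs s' hs' (by rw [Real.dist_eq]; linarith)
      rw [dist_eq_norm] at this
      exact this.le) (n + 1) le_rfl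
  rw [hmul] at this
  have h2 : ((n + 1 : ℕ) : ℝ) * (t / (n + 1)) = t := by push_cast; field_simp
  rw [h2] at this
  rw [dist_eq_norm]
  refine this.trans_lt ?_
  calc _ = δ * ((|t| * Real.exp (|t| * K)) / E) := by ring
    _ < δ * 1 := by
      gcongr
      rw [div_lt_one hE0]
      linarith
    _ = δ := mul_one δ

theorem measurePreserving_of_approx {Z : Type*} [NormedAddCommGroup Z] [ProperSpace Z]
    [MeasurableSpace Z] [BorelSpace Z] (μ : Measure Z) [μ.Regular] (Φ : Z ≃ₜ Z) (e : ℕ → Z → Z)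
    (he : ∀ n, MeasurePreserving (e n) μ μ) (R : ℝ)
    (hR : ∀ n z, ‖e n z - z‖ ≤ R) (hlim : ∀ z, Tendsto (fun n => e n z) atTop (𝓝 (Φ z))) :
    MeasurePreserving Φ μ μ := by
  refine ⟨Φ.continuous.measurable, ?_⟩
  have : (μ.map Φ).Regular := Measure.Regular.map Φ
  apply Measure.ext_of_integral_eq_on_compactlySupported
  intro g
  have hgc : Continuous g := g.continuous
  have hgs : HasCompactSupport g := g.hasCompactSupport
  rw [integral_map Φ.continuous.measurable.aemeasurable hgc.aestronglyMeasurable]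
  have hn : ∀ n, ∫ z, g (e n z) ∂μ = ∫ z, g z ∂μ := by
    intro n
    have := integral_map (he n).aemeasurable (f := g) hgc.aestronglyMeasurable
    rw [(he n).map_eq] at this
    exact this.symm
  obtain ⟨c, hc⟩ := hgs.exists_bound_of_continuous hgc
  obtain ⟨ρ, hρ⟩ := hgs.isCompact.isBounded.subset_closedBall 0
  have hlim2 : Tendsto (fun n => ∫ z, g (e n z) ∂μ) atTop (𝓝 (∫ z, g (Φ z) ∂μ)) := by
    apply tendsto_integral_of_dominated_convergence
      ((Metric.closedBall (0:Z) (ρ + R)).indicator fun _ => c)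
    · intro n
      exact (hgc.measurable.comp (he n).measurable).aestronglyMeasurable
    · rw [integrable_indicator_iff measurableSet_closedBall]
      exact integrableOn_const (isCompact_closedBall _ _).measure_lt_top.ne
    · intro n
      refine Eventually.of_forall fun z => ?_
      by_cases hz : z ∈ Metric.closedBall (0:Z) (ρ + R)
      · rw [indicator_of_mem hz]; exact hc _
      · rw [indicator_of_notMem hz]
        have : e n z ∉ tsupport g := fun h => by
          have h1 := hρ h
          rw [mem_closedBall_zero_iff] at h1 hz
          have h2 := hR n z
          have h3 : ‖z‖ ≤ ‖e n z‖ + ‖e n z - z‖ := by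
            have := norm_sub_le (e n z) (e n z - z)
            simpa using this
          linarith
        rw [image_eq_zero_of_notMem_tsupport this]
        simp
    · exact Eventually.of_forall fun z => (hgc.tendsto _).comp (hlim z)
  simp only [hn] at hlim2
  exact tendsto_nhds_unique hlim2 tendsto_const_nhds

/-! ### Shears -/

abbrev EE (d : ℕ) := EuclideanSpace ℝ (Fin d)

theorem mp_shear_snd {d : ℕ} (g : EE d → EE d) (hg : Measurable g) :
    MeasurePreserving (fun y : EE d × EE d => (y.1, y.2 + g y.1)) volume volume := by
  apply MeasurePreserving.skew_product (f := fun x => x) (g := fun x p => p + g x)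
    (MeasurePreserving.id _)
  · simp only [Function.uncurry_def]
    fun_prop
  · exact Eventually.of_forall fun x => (measurePreserving_add_right volume (g x)).map_eq

theorem mp_shear_fst {d : ℕ} (g : EE d → EE d) (hg : Measurable g) :
    MeasurePreserving (fun y : EE d × EE d => (y.1 + g y.2, y.2)) volume volume := by
  have hs : MeasurePreserving (Prod.swap : EE d × EE d → EE d × EE d) volume volume :=
    Measure.measurePreserving_swap
  exact hs.comp ((mp_shear_snd g hg).comp hs)

/-- Euler step is measure preserving. -/
theorem mp_step {d : ℕ} (a c β : ℝ) (h0 : a + β * c = 0) (F : EE d → EE d) (hF : Measurable F)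
    (h : ℝ) :
    MeasurePreserving (fun y : EE d × EE d => y + h • (a • F (y.1 + β • y.2), c • F (y.1 + β • y.2)))
      volume volume := by
  have h1 := mp_shear_fst (d := d) (fun p => β • p) (by fun_prop)
  have h2 := mp_shear_snd (d := d) (fun x => (h * c) • F x) (by fun_prop)
  have h3 := mp_shear_fst (d := d) (fun p => -(β • p)) (by fun_prop)
  have := h3.comp (h2.comp h1)
  convert this using 1
  ext y : 1
  have ha : a = - (β * c) := by linarith
  simp only [Function.comp]
  apply Prod.ext
  · simp only [Prod.fst_add, Prod.smul_fst, ha]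
    module
  · simp only [Prod.snd_add, Prod.smul_snd]
    module

theorem inverse_flow {Z : Type*} [NormedAddCommGroup Z] [NormedSpace ℝ Z] [CompleteSpace Z]
    (b : ℝ × Z → Z) (hb : Continuous b) (A K : ℝ) (hK : 0 ≤ K) (hA : ∀ q, ‖b q‖ ≤ A)
    (hL : ∀ s z z', ‖b (s, z) - b (s, z')‖ ≤ K * ‖z - z'‖)
    (Φ : ℝ × Z → Z) (hΦ0 : ∀ z, Φ (0, z) = z)
    (hΦ : ∀ t z, HasDerivAt (fun s => Φ (s, z)) (b (t, Φ (t, z))) t) :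
    ∃ Ψ : ℝ × Z → Z, Continuous Ψ ∧ (∀ t z, Ψ (t, Φ (t, z)) = z) ∧
      (∀ t z, Φ (t, Ψ (t, z)) = z) := by
  obtain ⟨y, hyc, hy0, hy⟩ := exists_flow (P := ℝ × Z) (B := Z) (fun p => p.2) continuous_snd
    (fun y q => b (q.2.1 + q.1, y q)) K A hK (fun y hy => by fun_prop) (fun s p => hA _)
    (fun y y' _ _ s C h p => (hL _ _ _).trans (by gcongr; exact h p))
  have hLip : ∀ t, LipschitzOnWith K.toNNReal (fun z => b (t, z)) univ := by
    intro t
    refine LipschitzOnWith.of_dist_le_mul fun z _ z' _ => ?_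
    rw [dist_eq_norm, dist_eq_norm, Real.coe_toNNReal _ hK]
    exact hL t z z'
  have hcurve : ∀ t₀ z s, HasDerivAt (fun s => y (s - t₀, (t₀, z))) (b (s, y (s - t₀, (t₀, z)))) s := by
    intro t₀ z s
    have h1 := (hy (s - t₀) (t₀, z)).comp_sub_const s t₀
    simpa using h1
  refine ⟨fun q => y (-q.1, q), by fun_prop, fun t z => ?_, fun t z => ?_⟩
  · have := ODE_solution_unique_univ (v := fun t z => b (t, z)) (s := fun _ => univ) (t₀ := t)
      hLip (fun s => ⟨hcurve t (Φ (t, z)) s, mem_univ _⟩) (fun s => ⟨hΦ s z, mem_univ _⟩)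
      (by simp [hy0])
    have h2 := congrFun this 0
    simpa [hΦ0] using h2
  · have := ODE_solution_unique_univ (v := fun t z => b (t, z)) (s := fun _ => univ) (t₀ := 0)
      hLip (fun s => ⟨hcurve t z s, mem_univ _⟩) (fun s => ⟨hΦ s (y (-t, (t, z))), mem_univ _⟩)
      (by simp [hΦ0])
    have h2 := congrFun this t
    simp only [sub_self, hy0] at h2
    exact h2.symm

/-- the inverse flow is `C¹` and is transported. -/
theorem inverse_flow_contDiff {Z : Type*} [NormedAddCommGroup Z] [NormedSpace ℝ Z] [CompleteSpace Z]
    (b : ℝ × Z → Z) (hb : Continuous b)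
    (N : ℝ × Z × Z → Z →L[ℝ] Z) (hN : Continuous N) (C : ℝ) (hC : ∀ q, ‖N q‖ ≤ C)
    (hbN : ∀ s z z', b (s, z') - b (s, z) = N (s, z, z') (z' - z))
    (Φ Ψ : ℝ × Z → Z) (hΦc : Continuous Φ) (hΦ0 : ∀ z, Φ (0, z) = z)
    (hΦ : ∀ t z, HasDerivAt (fun s => Φ (s, z)) (b (t, Φ (t, z))) t)
    (hΨc : Continuous Ψ) (hΦΨ : ∀ t z, Φ (t, Ψ (t, z)) = z) :
    ContDiff ℝ 1 Ψ ∧ ∀ t z, fderiv ℝ Ψ (t, z) (1, b (t, z)) = 0 := by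
  have hC0 : 0 ≤ C := (norm_nonneg _).trans (hC (0, 0, 0))
  let Bt : ℝ × Z × Z → Z →L[ℝ] Z := fun q => N (q.1, Φ (q.1, q.2.1), Φ (q.1, q.2.2))
  have hBt : Continuous Bt := by fun_prop
  obtain ⟨k, hkc, hk0, hk⟩ := exists_flow (P := Z × Z) (B := Z →L[ℝ] Z)
    (fun _ => ContinuousLinearMap.id ℝ Z) continuous_const
    (fun y q => -((y q).comp (Bt q))) C C hC0
    (fun y hy => (hy.clm_comp hBt).neg)
    (fun s p => by
      rw [norm_neg, ContinuousLinearMap.id_comp]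
      exact hC _)
    (fun y y' _ _ s c h p => by
      have e : -((y (s, p)).comp (Bt (s, p))) - -((y' (s, p)).comp (Bt (s, p))) =
        -((y (s, p) - y' (s, p)).comp (Bt (s, p))) := by
        rw [ContinuousLinearMap.sub_comp]; abel
      rw [e, norm_neg]
      refine (ContinuousLinearMap.opNorm_comp_le _ _).trans ?_
      rw [mul_comm]
      have h1 := h p
      have h2 : ‖Bt (s, p)‖ ≤ C := hC _
      gcongr)
  have hkey : ∀ t a a', k (t, (a, a')) (Φ (t, a') - Φ (t, a)) = a' - a := by
    intro t a a'
    have hd : ∀ s, HasDerivAt (fun s => k (s, (a, a')) (Φ (s, a') - Φ (s, a))) 0 s := by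
      intro s
      have h1 := (hk s (a, a')).clm_apply ((hΦ s a').sub (hΦ s a))
      refine h1.congr_deriv ?_
      rw [hbN]
      simp [Bt]
    have := is_const_of_deriv_eq_zero (fun s => (hd s).differentiableAt) (fun s => (hd s).deriv) t 0
    simp only [hk0, hΦ0] at this
    simpa using this
  -- time average
  let β : ℝ × ℝ × Z → Z := fun q => ∫ r in (0:ℝ)..1,
    b (q.1 + r * (q.2.1 - q.1), Φ (q.1 + r * (q.2.1 - q.1), q.2.2))
  have hβc : Continuous β := by
    apply intervalIntegral.continuous_parametric_intervalIntegral_of_continuous'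
    simp only [Function.uncurry_def]
    fun_prop
  have hβ : ∀ t t' a, Φ (t', a) - Φ (t, a) = (t' - t) • β (t, t', a) := by
    intro t t' a
    have := intervalIntegral.integral_eq_sub_of_hasDerivAt (a := 0) (b := 1)
      (f := fun r : ℝ => Φ (t + r * (t' - t), a))
      (f' := fun r : ℝ => (t' - t) • b (t + r * (t' - t), Φ (t + r * (t' - t), a))) (fun r _ => by
        have h1 : HasDerivAt (fun r : ℝ => t + r * (t' - t)) (t' - t) r := by
          simpa using ((hasDerivAt_id r).mul_const (t' - t)).const_add t
        exact (hΦ (t + r * (t' - t)) a).scomp r h1) (by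
          apply Continuous.intervalIntegrable; fun_prop)
    rw [intervalIntegral.integral_smul] at this
    simp only [β]
    rw [this]
    simp
  have hβd : ∀ t a, β (t, t, a) = b (t, Φ (t, a)) := by
    intro t a
    simp [β]
  let Q : (ℝ × Z) × (ℝ × Z) → (ℝ × Z) →L[ℝ] Z := fun q =>
    (k (q.1.1, (Ψ q.1, Ψ q.2))).comp (ContinuousLinearMap.snd ℝ ℝ Z -
      (ContinuousLinearMap.fst ℝ ℝ Z).smulRight (β (q.1.1, q.2.1, Ψ q.2)))
  have hQc : Continuous Q := by
    apply Continuous.clm_comp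
    · fun_prop
    · apply Continuous.sub continuous_const
      have h1 : Continuous fun q : (ℝ × Z) × (ℝ × Z) => β (q.1.1, q.2.1, Ψ q.2) := by fun_prop
      exact (ContinuousLinearMap.smulRightL ℝ (ℝ × Z) Z (ContinuousLinearMap.fst ℝ ℝ Z)).continuous.comp h1
  have hQ : ∀ p p', Ψ p' - Ψ p = Q (p, p') (p' - p) := by
    rintro ⟨t, z⟩ ⟨t', z'⟩
    rw [← hkey t (Ψ (t, z)) (Ψ (t', z'))]
    simp only [Q, ContinuousLinearMap.comp_apply]
    congr 1
    have h1 := hβ t t' (Ψ (t', z'))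
    rw [hΦΨ] at h1 ⊢
    simp only [sub_apply, ContinuousLinearMap.coe_snd', Prod.snd_sub,
      ContinuousLinearMap.smulRight_apply, ContinuousLinearMap.coe_fst', Prod.fst_sub]
    rw [← h1]
    abel
  refine ⟨hadamard_contDiff Ψ Q hQc hQ, fun t z => ?_⟩
  rw [(hadamard_hasFDerivAt Ψ Q hQc hQ (t, z)).fderiv]
  simp only [Q, ContinuousLinearMap.comp_apply]
  rw [hβd, hΦΨ]
  simp

/-- position functional -/
noncomputable def ell {d : ℕ} (β : ℝ) (y : EE d × EE d) : EE d := y.1 + β • y.2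

/-- vector field -/
noncomputable def bfield {d : ℕ} (α γ β : ℝ → ℝ) (F : ℝ × EE d → EE d) (q : ℝ × (EE d × EE d)) :
    EE d × EE d :=
  (α q.1 • F (q.1, ell (β q.1) q.2), γ q.1 • F (q.1, ell (β q.1) q.2))

/-- mean field force generated by the trajectories `y` -/
noncomputable def force {d : ℕ} (β : ℝ → ℝ) (gradK : EE d → EE d) (f₀ : EE d × EE d → ℝ)
    (y : ℝ × (EE d × EE d) → EE d × EE d) (q : ℝ × EE d) : EE d :=
  ∫ z, f₀ z • gradK (q.2 - ell (β q.1) (y (q.1, z)))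

theorem ell_sub_le {d : ℕ} (β C : ℝ) (hβ : |β| ≤ C) (y y' : EE d × EE d) :
    ‖ell β y - ell β y'‖ ≤ (1 + C) * ‖y - y'‖ := by
  have e : ell β y - ell β y' = (y - y').1 + β • (y - y').2 := by
    simp only [ell, Prod.fst_sub, Prod.snd_sub]; module
  rw [e]
  refine (norm_add_le _ _).trans ?_
  rw [norm_smul, Real.norm_eq_abs]
  have h1 := norm_fst_le (y - y')
  have h2 := norm_snd_le (y - y')
  have h3 : |β| * ‖(y - y').2‖ ≤ C * ‖y - y'‖ := by
    have := abs_nonneg β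
    gcongr
    linarith
  linarith

theorem pair_smul_le {d : ℕ} (a c C : ℝ) (ha : |a| ≤ C) (hc : |c| ≤ C) (u : EE d) :
    ‖((a • u, c • u) : EE d × EE d)‖ ≤ C * ‖u‖ := by
  rw [Prod.norm_def]
  simp only [norm_smul, Real.norm_eq_abs]
  apply max_le <;> gcongr

theorem force_integrable {d : ℕ} (gradK : EE d → EE d) (M : ℝ)
    (hbound : ∀ z, ‖gradK z‖ ≤ M) (hK : Continuous gradK) (f₀ : EE d × EE d → ℝ)
    (hf : Integrable f₀) (g : EE d × EE d → EE d) (hg : Continuous g) :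
    Integrable (fun z => f₀ z • gradK (g z)) := by
  refine (hf.norm.mul_const M).mono'
    (hf.aestronglyMeasurable.smul (hK.comp hg).aestronglyMeasurable) ?_
  refine Eventually.of_forall fun z => ?_
  rw [norm_smul]
  gcongr
  exact hbound _

theorem force_continuous {d : ℕ} (β : ℝ → ℝ) (hβ : Continuous β) (gradK : EE d → EE d) (M : ℝ)
    (hbound : ∀ z, ‖gradK z‖ ≤ M) (hK : Continuous gradK) (f₀ : EE d × EE d → ℝ)
    (hf : Integrable f₀) (y : ℝ × (EE d × EE d) → EE d × EE d) (hy : Continuous y) :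
    Continuous (force β gradK f₀ y) := by
  unfold force ell
  apply continuous_of_dominated (bound := fun z => ‖f₀ z‖ * M)
  · intro q
    exact (force_integrable gradK M hbound hK f₀ hf _ (by fun_prop)).aestronglyMeasurable
  · intro q
    refine Eventually.of_forall fun z => ?_
    rw [norm_smul]
    gcongr
    exact hbound _
  · exact hf.norm.mul_const M
  · refine Eventually.of_forall fun z => ?_
    fun_prop

theorem force_bound {d : ℕ} (β : ℝ → ℝ) (gradK : EE d → EE d) (M : ℝ)
    (hbound : ∀ z, ‖gradK z‖ ≤ M) (f₀ : EE d × EE d → ℝ)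
    (hf : Integrable f₀) (y : ℝ × (EE d × EE d) → EE d × EE d) (q : ℝ × EE d) :
    ‖force β gradK f₀ y q‖ ≤ (∫ z, ‖f₀ z‖) * M := by
  rw [← integral_mul_const]
  apply norm_integral_le_of_norm_le (hf.norm.mul_const M)
  refine Eventually.of_forall fun z => ?_
  rw [norm_smul]
  gcongr
  exact hbound _

theorem force_lip {d : ℕ} (β : ℝ → ℝ) (C : ℝ) (hβC : ∀ t, |β t| ≤ C)
    (gradK : EE d → EE d) (M : ℝ)
    (hbound : ∀ z, ‖gradK z‖ ≤ M) (L : NNReal) (hlip : LipschitzWith L gradK)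
    (f₀ : EE d × EE d → ℝ)
    (hf : Integrable f₀) (y y' : ℝ × (EE d × EE d) → EE d × EE d) (hy : Continuous y)
    (hy' : Continuous y') (s c : ℝ) (h : ∀ p, ‖y (s, p) - y' (s, p)‖ ≤ c) (x x' : EE d) :
    ‖force β gradK f₀ y (s, x) - force β gradK f₀ y' (s, x')‖ ≤
      (∫ z, ‖f₀ z‖) * (L * (‖x - x'‖ + (1 + C) * c)) := by
  have hC : 0 ≤ C := (abs_nonneg _).trans (hβC 0)
  unfold force
  rw [← integral_sub
    (force_integrable gradK M hbound hlip.continuous f₀ hf _ (by unfold ell; fun_prop))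
    (force_integrable gradK M hbound hlip.continuous f₀ hf _ (by unfold ell; fun_prop)),
    ← integral_mul_const]
  apply norm_integral_le_of_norm_le (hf.norm.mul_const _)
  refine Eventually.of_forall fun z => ?_
  simp only
  rw [← smul_sub, norm_smul]
  gcongr
  refine (hlip.norm_sub_le _ _).trans ?_
  gcongr
  have e : x - ell (β s) (y (s, z)) - (x' - ell (β s) (y' (s, z))) =
    (x - x') - (ell (β s) (y (s, z)) - ell (β s) (y' (s, z))) := by abel
  rw [e]
  refine (norm_sub_le _ _).trans ?_
  gcongr
  refine (ell_sub_le _ C (hβC s) _ _).trans ?_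
  gcongr
  exact h z

theorem bfield_continuous {d : ℕ} (α γ β : ℝ → ℝ) (hα : Continuous α) (hγ : Continuous γ)
    (hβ : Continuous β) (F : ℝ × EE d → EE d) (hF : Continuous F) :
    Continuous (bfield α γ β F) := by
  unfold bfield ell
  fun_prop

theorem bfield_bound {d : ℕ} (α γ β : ℝ → ℝ) (C : ℝ) (hαC : ∀ t, |α t| ≤ C)
    (hγC : ∀ t, |γ t| ≤ C) (F : ℝ × EE d → EE d) (A : ℝ) (hA : ∀ q, ‖F q‖ ≤ A)
    (q : ℝ × (EE d × EE d)) : ‖bfield α γ β F q‖ ≤ C * A := by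
  have hC : 0 ≤ C := (abs_nonneg _).trans (hαC 0)
  refine (pair_smul_le _ _ C (hαC _) (hγC _) _).trans ?_
  gcongr
  exact hA _

theorem bfield_sub {d : ℕ} (α γ β : ℝ → ℝ) (C : ℝ) (hαC : ∀ t, |α t| ≤ C)
    (hγC : ∀ t, |γ t| ≤ C) (F F' : ℝ × EE d → EE d) (s : ℝ) (y y' : EE d × EE d) :
    ‖bfield α γ β F (s, y) - bfield α γ β F' (s, y')‖ ≤
      C * ‖F (s, ell (β s) y) - F' (s, ell (β s) y')‖ := by
  have e : bfield α γ β F (s, y) - bfield α γ β F' (s, y') =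
    (α s • (F (s, ell (β s) y) - F' (s, ell (β s) y')),
     γ s • (F (s, ell (β s) y) - F' (s, ell (β s) y'))) := by
    simp only [bfield, smul_sub, Prod.mk_sub_mk]
  rw [e]
  exact pair_smul_le _ _ C (hαC _) (hγC _) _

theorem mean_field {d : ℕ} (α γ β : ℝ → ℝ) (hα : Continuous α) (hγ : Continuous γ)
    (hβ : Continuous β) (C : ℝ) (hαC : ∀ t, |α t| ≤ C)
    (hγC : ∀ t, |γ t| ≤ C) (hβC : ∀ t, |β t| ≤ C)
    (gradK : EE d → EE d) (M : ℝ)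
    (hbound : ∀ z, ‖gradK z‖ ≤ M) (L : NNReal) (hlip : LipschitzWith L gradK)
    (f₀ : EE d × EE d → ℝ) (hf : Integrable f₀) :
    ∃ Φ : ℝ × (EE d × EE d) → EE d × EE d, Continuous Φ ∧ (∀ z, Φ (0, z) = z) ∧
      ∀ t z, HasDerivAt (fun s => Φ (s, z))
        (bfield α γ β (force β gradK f₀ Φ) (t, Φ (t, z))) t := by
  have hC : 0 ≤ C := (abs_nonneg _).trans (hαC 0)
  refine exists_flow (fun z => z) continuous_id
    (fun y q => bfield α γ β (force β gradK f₀ y) (q.1, y q))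
    (C * ((∫ z, ‖f₀ z‖) * (L * ((1 + C) + (1 + C))))) (C * ((∫ z, ‖f₀ z‖) * M)) (by positivity)
    ?_ ?_ ?_
  · intro y hy
    exact (bfield_continuous α γ β hα hγ hβ _ (force_continuous β hβ gradK M hbound hlip.continuous
      f₀ hf y hy)).comp (by fun_prop)
  · intro s p
    exact bfield_bound α γ β C hαC hγC _ _ (force_bound β gradK M hbound f₀ hf _) _
  · intro y y' hy hy' s c h p
    refine (bfield_sub α γ β C hαC hγC _ _ s _ _).trans ?_
    rw [mul_assoc, mul_assoc, mul_assoc]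
    gcongr
    refine (force_lip β C hβC gradK M hbound L hlip f₀ hf y y' hy hy' s c h _ _).trans ?_
    have := ell_sub_le (β s) C (hβC s) (y (s, p)) (y' (s, p))
    have h2 := h p
    gcongr
    calc _ ≤ (1 + C) * c + (1 + C) * c := by
          gcongr
          exact this.trans (by gcongr)
      _ = _ := by ring

theorem flow_mp {d : ℕ} (α γ β : ℝ → ℝ) (h0 : ∀ t, α t + β t * γ t = 0)
    (C : ℝ) (hαC : ∀ t, |α t| ≤ C)
    (hγC : ∀ t, |γ t| ≤ C) (hβC : ∀ t, |β t| ≤ C)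
    (F : ℝ × EE d → EE d) (hFc : Continuous F) (A K : ℝ) (hK : 0 ≤ K) (hA : ∀ q, ‖F q‖ ≤ A)
    (hFL : ∀ s x x', ‖F (s, x) - F (s, x')‖ ≤ K * ‖x - x'‖)
    (hb : Continuous (bfield α γ β F))
    (Φ Ψ : ℝ × (EE d × EE d) → EE d × EE d) (hΦc : Continuous Φ) (hΨc : Continuous Ψ)
    (hΦ0 : ∀ z, Φ (0, z) = z)
    (hΦ : ∀ t z, HasDerivAt (fun s => Φ (s, z)) (bfield α γ β F (t, Φ (t, z))) t)
    (hΨΦ : ∀ t z, Ψ (t, Φ (t, z)) = z) (hΦΨ : ∀ t z, Φ (t, Ψ (t, z)) = z) (t : ℝ) :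
    MeasurePreserving (fun z => Φ (t, z)) volume volume ∧
      MeasurePreserving (fun z => Ψ (t, z)) volume volume := by
  have hC : 0 ≤ C := (abs_nonneg _).trans (hαC 0)
  let e : (EE d × EE d) ≃ₜ (EE d × EE d) :=
    { toFun := fun z => Φ (t, z)
      invFun := fun z => Ψ (t, z)
      left_inv := hΨΦ t
      right_inv := hΦΨ t
      continuous_toFun := by fun_prop
      continuous_invFun := by fun_prop }
  have hbb : ∀ q, ‖bfield α γ β F q‖ ≤ C * A := bfield_bound α γ β C hαC hγC F A hA
  have hmp : ∀ h k, MeasurePreserving (eul (fun s z => bfield α γ β F (s, z)) h k) volume volume := by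
    intro h k
    induction k with
    | zero => exact MeasurePreserving.id _
    | succ k ih =>
      exact (mp_step (α (k * h)) (γ (k * h)) (β (k * h)) (h0 _) (fun x => F (k * h, x))
        (by fun_prop) h).comp ih
  have hreg : (volume : Measure (EE d × EE d)).Regular := inferInstance
  have h1 : MeasurePreserving e volume volume := by
    apply measurePreserving_of_approx volume e
      (fun n => eul (fun s z => bfield α γ β F (s, z)) (t / (n + 1)) (n + 1))
      (fun n => hmp _ _) (|t| * (C * A))
    · intro n z
      refine (eul_bound (fun s z => bfield α γ β F (s, z)) _ (C * A) (fun s z => hbb _) _ z).trans ?_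
      have hn1 : (0:ℝ) < n + 1 := by positivity
      have : ((n + 1 : ℕ) : ℝ) * |t / (n + 1)| = |t| := by
        rw [abs_div, abs_of_pos hn1]; push_cast; field_simp
      rw [this]
    · intro z
      have := eul_tendsto (fun s z => bfield α γ β F (s, z)) (C * (K * (1 + C))) t (by positivity)
        (fun s z z' => by
          refine (bfield_sub α γ β C hαC hγC F F s z z').trans ?_
          rw [mul_assoc, mul_assoc]
          gcongr
          refine (hFL _ _ _).trans ?_
          gcongr
          exact ell_sub_le _ C (hβC s) _ _)
        (fun s => Φ (s, z)) (fun s => hΦ s z) (by fun_prop)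
      simp only [hΦ0] at this
      exact this
  refine ⟨h1, ?_⟩
  exact h1.symm e.toMeasurableEquiv

theorem force_hasFDerivAt {d : ℕ} (β : ℝ → ℝ)
    (gradK : EE d → EE d) (M : ℝ)
    (hbound : ∀ z, ‖gradK z‖ ≤ M) (L : NNReal) (hlip : LipschitzWith L gradK)
    (f₀ : EE d × EE d → ℝ) (hf : Integrable f₀)
    (Φ : ℝ × (EE d × EE d) → EE d × EE d) (hΦc : Continuous Φ) (t : ℝ)
    (hmp : MeasurePreserving (fun z => Φ (t, z)) volume volume) (x : EE d) :
    HasFDerivAt (fun x => force β gradK f₀ Φ (t, x))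
      (∫ z, f₀ z • fderiv ℝ gradK (x - ell (β t) (Φ (t, z)))) x := by
  have hq : Measure.QuasiMeasurePreserving (fun z => x - ell (β t) (Φ (t, z))) volume volume := by
    have h1 := (mp_shear_fst (d := d) (fun p => β t • p) (by fun_prop)).comp hmp
    have h2 : Measure.QuasiMeasurePreserving (Prod.fst : EE d × EE d → EE d) volume volume :=
      Measure.quasiMeasurePreserving_fst
    have h3 := Measure.measurePreserving_sub_left (volume : Measure (EE d)) x
    exact h3.quasiMeasurePreserving.comp (h2.comp h1.quasiMeasurePreserving)
  have hae : ∀ᵐ z : EE d × EE d, DifferentiableAt ℝ gradK (x - ell (β t) (Φ (t, z))) :=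
    hq.ae hlip.ae_differentiableAt
  have hDm : Measurable (fderiv ℝ gradK) := measurable_fderiv ℝ gradK
  have hce : Continuous fun z => ell (β t) (Φ (t, z)) := by unfold ell; fun_prop
  refine (hasFDerivAt_integral_of_dominated_loc_of_lip (bound := fun z => ‖f₀ z‖ * L)
    (F := fun x z => f₀ z • gradK (x - ell (β t) (Φ (t, z)))) (s := univ) univ_mem ?_ ?_ ?_ ?_ ?_ ?_).2
  · refine Eventually.of_forall fun x => ?_
    exact (force_integrable gradK M hbound hlip.continuous f₀ hf _ (by fun_prop)).aestronglyMeasurable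
  · exact force_integrable gradK M hbound hlip.continuous f₀ hf _ (by fun_prop)
  · exact hf.aestronglyMeasurable.smul (hDm.comp (continuous_const.sub hce).measurable).aestronglyMeasurable
  · refine Eventually.of_forall fun z => ?_
    refine LipschitzOnWith.of_dist_le_mul fun x _ x' _ => ?_
    rw [dist_eq_norm, dist_eq_norm, ← smul_sub, norm_smul, Real.coe_nnabs, abs_of_nonneg (by positivity),
      mul_assoc]
    gcongr
    have := hlip.norm_sub_le (x - ell (β t) (Φ (t, z))) (x' - ell (β t) (Φ (t, z)))
    simpa using this
  · exact hf.norm.mul_const _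
  · filter_upwards [hae] with z hz
    have h1 : HasFDerivAt (fun x => gradK (x - ell (β t) (Φ (t, z))))
        (fderiv ℝ gradK (x - ell (β t) (Φ (t, z)))) x := by
      exact (hasFDerivAt_comp_sub _).2 hz.hasFDerivAt
    exact h1.const_smul (f₀ z)

theorem force_fderiv_continuous {d : ℕ} (β : ℝ → ℝ) (hβ : Continuous β)
    (gradK : EE d → EE d) (L : NNReal) (hlip : LipschitzWith L gradK)
    (f₀ : EE d × EE d → ℝ) (hf : Integrable f₀)
    (Φ Ψ : ℝ × (EE d × EE d) → EE d × EE d) (hΦc : Continuous Φ) (hΨc : Continuous Ψ)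
    (hmp : ∀ t, MeasurePreserving (fun z => Ψ (t, z)) volume volume)
    (hΦΨ : ∀ t z, Φ (t, Ψ (t, z)) = z) :
    Continuous fun q : ℝ × EE d =>
      ∫ z, f₀ z • fderiv ℝ gradK (q.2 - ell (β q.1) (Φ (q.1, z))) := by
  have hDm : Measurable (fderiv ℝ gradK) := measurable_fderiv ℝ gradK
  let θ : (ℝ × EE d) × (EE d × EE d) → EE d × EE d := fun r =>
    Ψ (r.1.1, (r.2.1 + (r.1.2 - β r.1.1 • r.2.2), r.2.2))
  let σ : (ℝ × EE d) × (EE d × EE d) → EE d × EE d := fun r =>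
    ((Φ (r.1.1, r.2)).1 - (r.1.2 - β r.1.1 • (Φ (r.1.1, r.2)).2), (Φ (r.1.1, r.2)).2)
  have hθ : Continuous θ := by fun_prop
  have hσ : Continuous σ := by fun_prop
  have hmpθ : ∀ s, MeasurePreserving (fun z => θ (s, z)) volume volume := by
    intro s
    exact (hmp s.1).comp (mp_shear_fst (d := d) (fun p => s.2 - β s.1 • p) (by fun_prop))
  have hreg : (volume : Measure (EE d × EE d)).Regular := inferInstance
  have := continuous_integral_comp (volume : Measure (EE d × EE d)) θ σ hθ hσ
    (fun s z => by simp [θ, σ, hΦΨ]) hmpθ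
    (fun y => fderiv ℝ gradK (-y.1)) (hDm.comp (by fun_prop)).aestronglyMeasurable L
    (fun z => norm_fderiv_le_of_lipschitz ℝ hlip) f₀ hf
  have heq : (fun q : ℝ × EE d =>
      ∫ z, f₀ z • fderiv ℝ gradK (q.2 - ell (β q.1) (Φ (q.1, z)))) =
      fun s => ∫ z, f₀ (θ (s, z)) • fderiv ℝ gradK (-z.1) := by
    ext1 q
    have h1 := integral_map (hmpθ q).aemeasurable
      (f := fun z => f₀ z • fderiv ℝ gradK (q.2 - ell (β q.1) (Φ (q.1, z)))) (by
        rw [(hmpθ q).map_eq]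
        refine hf.aestronglyMeasurable.smul (hDm.comp ?_).aestronglyMeasurable
        unfold ell
        fun_prop)
    rw [(hmpθ q).map_eq] at h1
    rw [h1]
    congr 1
    ext1 z
    congr 2
    simp only [θ, hΦΨ, ell]
    abel
  rw [heq]
  exact this

theorem core {d : ℕ} (α γ β : ℝ → ℝ) (hα : Continuous α) (hγ : Continuous γ)
    (hβ : Continuous β) (h0 : ∀ t, α t + β t * γ t = 0) (C : ℝ) (hαC : ∀ t, |α t| ≤ C)
    (hγC : ∀ t, |γ t| ≤ C) (hβC : ∀ t, |β t| ≤ C)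
    (gradK : EE d → EE d) (M : ℝ)
    (hbound : ∀ z, ‖gradK z‖ ≤ M) (L : NNReal) (hlip : LipschitzWith L gradK)
    (f₀ : EE d × EE d → ℝ) (hf : Integrable f₀) :
    ∃ Φ Ψ : ℝ × (EE d × EE d) → EE d × EE d, Continuous Φ ∧ ContDiff ℝ 1 Ψ ∧
      (∀ z, Ψ (0, z) = z) ∧
      (∀ t, MeasurePreserving (fun z => Ψ (t, z)) volume volume) ∧
      (∀ t z, Φ (t, Ψ (t, z)) = z) ∧
      ∀ t z, fderiv ℝ Ψ (t, z) (1, bfield α γ β (force β gradK f₀ Φ) (t, z)) = 0 := by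
  have hC : 0 ≤ C := (abs_nonneg _).trans (hαC 0)
  obtain ⟨Φ, hΦc, hΦ0, hΦ⟩ := mean_field α γ β hα hγ hβ C hαC hγC hβC gradK M hbound L hlip f₀ hf
  set F := force β gradK f₀ Φ with hF
  have hFc : Continuous F := force_continuous β hβ gradK M hbound hlip.continuous f₀ hf Φ hΦc
  have hFb := force_bound β gradK M hbound f₀ hf Φ
  set K : ℝ := (∫ z, ‖f₀ z‖) * L with hKdef
  have hK : 0 ≤ K := by positivity
  have hFL : ∀ s x x', ‖F (s, x) - F (s, x')‖ ≤ K * ‖x - x'‖ := by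
    intro s x x'
    have := force_lip β C hβC gradK M hbound L hlip f₀ hf Φ Φ hΦc hΦc s 0 (by simp) x x'
    rw [mul_zero, add_zero, ← mul_assoc] at this
    exact this
  have hb := bfield_continuous α γ β hα hγ hβ F hFc
  have hbL : ∀ s z z', ‖bfield α γ β F (s, z) - bfield α γ β F (s, z')‖ ≤
      C * (K * (1 + C)) * ‖z - z'‖ := by
    intro s z z'
    refine (bfield_sub α γ β C hαC hγC F F s z z').trans ?_
    rw [mul_assoc, mul_assoc]
    gcongr
    refine (hFL _ _ _).trans ?_
    gcongr
    exact ell_sub_le _ C (hβC s) _ _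
  obtain ⟨Ψ, hΨc, hΨΦ, hΦΨ⟩ := inverse_flow (bfield α γ β F) hb _ _ (by positivity)
    (bfield_bound α γ β C hαC hγC F _ hFb) hbL Φ hΦ0 hΦ
  have hmp := flow_mp α γ β h0 C hαC hγC hβC F hFc _ K hK hFb hFL hb Φ Ψ hΦc hΨc hΦ0 hΦ hΨΦ hΦΨ
  obtain ⟨N, hNc, hNb, hN⟩ := hadamard_of_deriv F _
    (force_fderiv_continuous β hβ gradK L hlip f₀ hf Φ Ψ hΦc hΨc (fun t => (hmp t).2) hΦΨ)
    (fun t x => force_hasFDerivAt β gradK M hbound L hlip f₀ hf Φ hΦc t (hmp t).1 x) K (by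
      intro q
      rw [hKdef, ← integral_mul_const]
      apply norm_integral_le_of_norm_le (hf.norm.mul_const _)
      refine Eventually.of_forall fun z => ?_
      rw [norm_smul]
      gcongr
      exact norm_fderiv_le_of_lipschitz ℝ hlip)
  let el : ℝ → (EE d × EE d) →L[ℝ] EE d := fun c =>
    ContinuousLinearMap.fst ℝ (EE d) (EE d) + c • ContinuousLinearMap.snd ℝ (EE d) (EE d)
  let w : ℝ → EE d →L[ℝ] EE d × EE d := fun s =>
    α s • ContinuousLinearMap.inl ℝ (EE d) (EE d) + γ s • ContinuousLinearMap.inr ℝ (EE d) (EE d)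
  have hel : ∀ c z, el c z = ell c z := fun c z => rfl
  have hw : ∀ s u, w s u = (α s • u, γ s • u) := fun s u => by simp [w]
  let Nb : ℝ × (EE d × EE d) × (EE d × EE d) → (EE d × EE d) →L[ℝ] (EE d × EE d) := fun q =>
    (w q.1).comp ((N (q.1, ell (β q.1) q.2.1, ell (β q.1) q.2.2)).comp (el (β q.1)))
  obtain ⟨h1, h2⟩ := inverse_flow_contDiff (bfield α γ β F) hb Nb (by
      apply Continuous.clm_comp
      · fun_prop
      · apply Continuous.clm_comp
        · unfold ell
          fun_prop
        · fun_prop) (C * (K * (1 + C))) (by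
      rintro ⟨s, z, z'⟩
      refine ContinuousLinearMap.opNorm_le_bound _ (by positivity) fun h => ?_
      simp only [Nb, ContinuousLinearMap.comp_apply, hw]
      refine (pair_smul_le _ _ C (hαC _) (hγC _) _).trans ?_
      rw [mul_assoc, mul_assoc]
      gcongr
      refine (ContinuousLinearMap.le_opNorm _ _).trans ?_
      have h3 := hNb (s, ell (β s) z, ell (β s) z')
      have h4 := ell_sub_le (β s) C (hβC s) h 0
      rw [hel]
      have h5 : ell (β s) (0 : EE d × EE d) = 0 := by simp [ell]
      rw [h5, sub_zero, sub_zero] at h4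
      gcongr) (by
      intro s z z'
      simp only [Nb, ContinuousLinearMap.comp_apply, hw]
      rw [map_sub, hel, hel, ← hN]
      simp only [bfield, smul_sub, Prod.mk_sub_mk]) Φ Ψ hΦc hΦ0 hΦ hΨc hΦΨ
  exact ⟨Φ, Ψ, hΦc, h1, fun z => by simpa [hΦ0] using hΨΦ 0 z, fun t => (hmp t).2, hΦΨ, h2⟩

theorem map_scale {d : ℕ} (l c : ℝ) (hl : 0 < l) :
    Measure.map (fun p : EE d × EE d => (p.1 - c • p.2, l • p.2)) volume =
      ENNReal.ofReal ((l ^ d)⁻¹) • (volume : Measure (EE d × EE d)) := by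
  have h1 := mp_shear_fst (d := d) (fun p => -((c / l) • p)) (by fun_prop)
  have h2 : Measure.map (Prod.map id (fun v : EE d => l • v)) (volume : Measure (EE d × EE d)) =
      ENNReal.ofReal ((l ^ d)⁻¹) • (volume : Measure (EE d × EE d)) := by
    rw [Measure.volume_eq_prod, ← Measure.map_prod_map _ _ measurable_id (by fun_prop)]
    have := Measure.map_addHaar_smul (volume : Measure (EE d)) hl.ne'
    have h3 : Measure.map (fun v : EE d => l • v) volume =
      ENNReal.ofReal ((l ^ d)⁻¹) • (volume : Measure (EE d)) := by
      rw [this, finrank_euclideanSpace_fin, abs_of_pos (by positivity)]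
    rw [h3, Measure.map_id, Measure.prod_smul_right]
  have h4 : (fun p : EE d × EE d => (p.1 - c • p.2, l • p.2)) =
      (fun y : EE d × EE d => (y.1 + -((c / l) • y.2), y.2)) ∘
        (Prod.map id (fun v : EE d => l • v)) := by
    ext1 p
    simp only [Function.comp, Prod.map, id]
    rw [smul_smul, div_mul_cancel₀ _ hl.ne', sub_eq_add_neg]
  rw [h4, ← Measure.map_map h1.measurable (by fun_prop), h2, Measure.map_smul, h1.map_eq]

theorem consistency {d : ℕ} (l c b : ℝ) (hl : 0 < l) (hc : b * l = c)
    (gradK : EE d → EE d) (M : ℝ) (hbound : ∀ z, ‖gradK z‖ ≤ M) (hK : Continuous gradK)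
    (f₀ : EE d × EE d → ℝ) (hf : Integrable f₀)
    (φ ψ : EE d × EE d → EE d × EE d) (hφ : Continuous φ)
    (hmp : MeasurePreserving ψ volume volume) (hφψ : ∀ z, φ (ψ z) = z)
    (g : EE d × EE d → ℝ)
    (hg : ∀ p, g p = l ^ d * f₀ (ψ (p.1 - c • p.2, l • p.2))) :
    Integrable g ∧ ∀ x, ∫ y, (∫ w, g (y, w)) • gradK (x - y) =
      ∫ z, f₀ z • gradK (x - ell b (φ z)) := by
  have hld : 0 < l ^ d := by positivity
  have hA : Measurable (fun p : EE d × EE d => (p.1 - c • p.2, l • p.2)) := by fun_prop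
  have hfψ : Integrable (fun z => f₀ (ψ z)) := hmp.integrable_comp_of_integrable hf
  have hgi : Integrable g := by
    have h1 : Integrable (fun z => f₀ (ψ z))
        (Measure.map (fun p : EE d × EE d => (p.1 - c • p.2, l • p.2)) volume) := by
      rw [map_scale l c hl]
      exact hfψ.smul_measure ENNReal.ofReal_ne_top
    have h2 := (h1.comp_measurable hA).const_mul (l ^ d)
    exact h2.congr (Eventually.of_forall fun p => (hg p).symm)
  refine ⟨hgi, fun x => ?_⟩
  have hell : Continuous (ell (d := d) b) := by unfold ell; fun_prop
  have h3 : Integrable fun p : EE d × EE d => g p • gradK (x - p.1) := by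
    refine (hgi.norm.mul_const M).mono' (hgi.aestronglyMeasurable.smul
      (by fun_prop : Continuous fun p : EE d × EE d => gradK (x - p.1)).aestronglyMeasurable) ?_
    refine Eventually.of_forall fun p => ?_
    rw [norm_smul]
    gcongr
    exact hbound _
  have h4 : ∫ y, (∫ w, g (y, w)) • gradK (x - y) = ∫ p, g p • gradK (x - p.1) := by
    rw [Measure.volume_eq_prod] at h3 ⊢
    rw [integral_prod _ h3]
    congr 1
    ext1 y
    exact (integral_smul_const _ _).symm
  have hG : AEStronglyMeasurable (fun z => f₀ (ψ z) • gradK (x - ell b z)) volume :=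
    hfψ.aestronglyMeasurable.smul
      (by fun_prop : Continuous fun z => gradK (x - ell b z)).aestronglyMeasurable
  have h5 : ∫ p, g p • gradK (x - p.1) =
      ∫ z, f₀ (ψ z) • gradK (x - ell b z) := by
    have h6 := integral_map (μ := volume) hA.aemeasurable
      (f := fun z => f₀ (ψ z) • gradK (x - ell b z)) (by
        rw [map_scale l c hl]
        exact hG.smul_measure _)
    rw [map_scale l c hl, integral_smul_measure, ENNReal.toReal_ofReal (by positivity)] at h6
    have h7 : (∫ p, g p • gradK (x - p.1)) = l ^ d • ∫ p : EE d × EE d,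
        f₀ (ψ (p.1 - c • p.2, l • p.2)) • gradK (x - ell b (p.1 - c • p.2, l • p.2)) := by
      rw [← integral_smul]
      congr 1
      ext1 p
      rw [hg, smul_smul]
      congr 3
      simp only [ell]
      rw [smul_smul, hc, sub_add_cancel]
    rw [h7, ← h6, smul_smul, mul_inv_cancel₀ hld.ne', one_smul]
  rw [h4, h5]
  have h8 := integral_map (μ := volume) hmp.aemeasurable
    (f := fun z => f₀ z • gradK (x - ell b (φ z))) (by
      rw [hmp.map_eq]
      exact (force_integrable gradK M hbound hK f₀ hf _ (by fun_prop)).aestronglyMeasurable)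
  rw [hmp.map_eq] at h8
  rw [h8]
  simp only [hφψ]

theorem transport {d : ℕ} (ε : ℝ) (hε : 0 < ε) (f₀ : EE d × EE d → ℝ) (hf₀ : ContDiff ℝ 1 f₀)
    (Ψ : ℝ × (EE d × EE d) → EE d × EE d) (hΨ : ContDiff ℝ 1 Ψ)
    (f : ℝ × EE d × EE d → ℝ) (hf : f = fun q => Real.exp (q.1 / ε) ^ d *
      f₀ (Ψ (q.1, (q.2.1 - (ε * (Real.exp (q.1 / ε) - 1)) • q.2.2, Real.exp (q.1 / ε) • q.2.2))))
    (t : ℝ) (x v F : EE d)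
    (hF : fderiv ℝ Ψ (t, (x - (ε * (Real.exp (t / ε) - 1)) • v, Real.exp (t / ε) • v))
      (1, ((Real.exp (t / ε) - 1) • F, (-(Real.exp (t / ε) / ε)) • F)) = 0) :
    ContDiff ℝ 1 f ∧ fderiv ℝ f (t, x, v) (1, v, 0) =
      ε⁻¹ * ((d : ℝ) * f (t, x, v) + fderiv ℝ f (t, x, v) (0, 0, v + F)) := by
  have hfc : ContDiff ℝ 1 f := by
    rw [hf]
    fun_prop
  refine ⟨hfc, ?_⟩
  set u : EE d := ε⁻¹ • (v + F) with hu
  have hdf : DifferentiableAt ℝ f (t, x, v) := hfc.contDiffAt.differentiableAt (by norm_num)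
  have hc : HasDerivAt (fun s : ℝ => (t + s, x + s • v, v - s • u)) (1, v, -u) 0 := by
    have a1 : HasDerivAt (fun s : ℝ => t + s) 1 0 := (hasDerivAt_id 0).const_add t
    have a2 : HasDerivAt (fun s : ℝ => x + s • v) v 0 := by
      simpa using ((hasDerivAt_id (0:ℝ)).smul_const v).const_add x
    have a3 : HasDerivAt (fun s : ℝ => v - s • u) (-u) 0 := by
      simpa using ((hasDerivAt_id (0:ℝ)).smul_const u).const_sub v
    exact a1.prodMk (a2.prodMk a3)
  have h1 : HasDerivAt (fun s : ℝ => f (t + s, x + s • v, v - s • u))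
      (fderiv ℝ f (t, x, v) (1, v, -u)) 0 := by
    have := hdf.hasFDerivAt
    exact HasFDerivAt.comp_hasDerivAt_of_eq (0:ℝ) this hc (by simp)
  set lam := Real.exp (t / ε) with hlam
  have he : HasDerivAt (fun s : ℝ => Real.exp ((t + s) / ε)) (lam / ε) 0 := by
    have := (((hasDerivAt_id (0:ℝ)).const_add t).div_const ε).exp
    simpa [hlam, div_eq_mul_inv] using this
  have hP : HasDerivAt (fun s : ℝ => Real.exp ((t + s) / ε) • (v - s • u))
      ((-(lam / ε)) • F) 0 := by
    have a3 : HasDerivAt (fun s : ℝ => v - s • u) (-u) 0 := by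
      simpa using ((hasDerivAt_id (0:ℝ)).smul_const u).const_sub v
    have := he.smul a3
    refine this.congr_deriv ?_
    simp only [add_zero, ← hlam, zero_smul, sub_zero, hu]
    module
  have hQ : HasDerivAt (fun s : ℝ => x + s • v -
      (ε * (Real.exp ((t + s) / ε) - 1)) • (v - s • u)) ((lam - 1) • F) 0 := by
    have a2 : HasDerivAt (fun s : ℝ => x + s • v) v 0 := by
      simpa using ((hasDerivAt_id (0:ℝ)).smul_const v).const_add x
    have a3 : HasDerivAt (fun s : ℝ => v - s • u) (-u) 0 := by
      simpa using ((hasDerivAt_id (0:ℝ)).smul_const u).const_sub v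
    have := a2.sub (((he.sub_const 1).const_mul ε).smul a3)
    refine this.congr_deriv ?_
    simp only [add_zero, ← hlam, zero_smul, sub_zero, hu]
    match_scalars <;> field_simp <;> ring
  have hy := (((hasDerivAt_id (0:ℝ)).const_add t).prodMk (hQ.prodMk hP))
  have hΨd : HasDerivAt (fun s : ℝ => Ψ (t + s, (x + s • v -
      (ε * (Real.exp ((t + s) / ε) - 1)) • (v - s • u),
      Real.exp ((t + s) / ε) • (v - s • u)))) 0 0 := by
    have hd : DifferentiableAt ℝ Ψ (t, (x - (ε * (lam - 1)) • v, lam • v)) :=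
      hΨ.contDiffAt.differentiableAt (by norm_num)
    rw [← hF]
    exact HasFDerivAt.comp_hasDerivAt_of_eq (0:ℝ) hd.hasFDerivAt hy (by simp [hlam])
  have hfΨ : HasDerivAt (fun s : ℝ => f₀ (Ψ (t + s, (x + s • v -
      (ε * (Real.exp ((t + s) / ε) - 1)) • (v - s • u),
      Real.exp ((t + s) / ε) • (v - s • u))))) 0 0 := by
    have hd : DifferentiableAt ℝ f₀ (Ψ (t, (x - (ε * (lam - 1)) • v, lam • v))) :=
      hf₀.contDiffAt.differentiableAt (by norm_num)
    have := HasFDerivAt.comp_hasDerivAt_of_eq (0:ℝ) hd.hasFDerivAt hΨd (by simp [hlam])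
    rwa [map_zero] at this
  have h2 := (he.pow d).mul hfΨ
  have h3 : fderiv ℝ f (t, x, v) (1, v, -u) = ε⁻¹ * (d * f (t, x, v)) := by
    have h4 := h1.unique (h2.congr_of_eventuallyEq (Eventually.of_forall fun s => by simp [hf]))
    rw [h4, hf]
    simp only [add_zero, ← hlam, zero_smul, sub_zero, mul_zero]
    rcases d with _ | n
    · simp
    · simp only [Nat.add_sub_cancel, pow_succ]
      ring
  have h5 : ((1, v, 0) : ℝ × EE d × EE d) = (1, v, -u) + ε⁻¹ • (0, 0, v + F) := by
    simp [hu]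
  rw [h5, map_add, map_smul, h3, smul_eq_mul, mul_add]

end KinAgg

/-- **Existence of smooth solutions of the kinetic aggregation equation.**
If `f₀ ∈ C² ∩ L¹(ℝ^d × ℝ^d)` and `∇K ∈ W^{1,∞}(ℝ^d)` (bounded and Lipschitz),
then for any `T > 0` and `ε > 0` the kinetic equation
`∂ₜ f + v·∇ₓ f = (1/ε) ∇_v·((v + ∇K ∗ ρ) f)`, with
`ρ(t,x) = ∫ f(t,x,v) dv` and `(∇K ∗ ρ)(t,x) = ∫ ∇K(x-y) ρ(t,y) dy`, has a
continuously differentiable solution `f` with `f(t,·,·) ∈ L¹` for each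
`t ∈ [0,T]` and `f(0,·,·) = f₀`. Since `∇_v·((v + ∇K ∗ ρ) f)
= d·f + (v + ∇K ∗ ρ)·∇_v f`, the equation is written below using directional
derivatives of `f`. -/
theorem exists_smooth_kinetic_solution
    (d : ℕ) (T ε M : ℝ) (hT : 0 < T) (hε : 0 < ε)
    (gradK : EuclideanSpace ℝ (Fin d) → EuclideanSpace ℝ (Fin d)) (L : NNReal)
    (hbound : ∀ z, ‖gradK z‖ ≤ M)
    (hlip : LipschitzWith L gradK)
    (f₀ : EuclideanSpace ℝ (Fin d) × EuclideanSpace ℝ (Fin d) → ℝ)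
    (hf₀smooth : ContDiff ℝ 2 f₀)
    (hf₀int : Integrable f₀) :
    ∃ f : ℝ × EuclideanSpace ℝ (Fin d) × EuclideanSpace ℝ (Fin d) → ℝ,
      ContDiff ℝ 1 f ∧
      (∀ t ∈ Icc (0:ℝ) T,
        Integrable (fun p : EuclideanSpace ℝ (Fin d) × EuclideanSpace ℝ (Fin d) =>
          f (t, p.1, p.2))) ∧
      (∀ x v, f (0, x, v) = f₀ (x, v)) ∧
      (∀ t ∈ Icc (0:ℝ) T, ∀ x v,
        -- ∂ₜ f + v·∇ₓ f = (1/ε) (d · f + (v + ∇K ∗ ρ)·∇_v f), i.e. the kinetic equation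
        fderiv ℝ f (t, x, v) (1, v, 0) =
          ε⁻¹ * ((d : ℝ) * f (t, x, v) +
            fderiv ℝ f (t, x, v)
              (0, 0, v + ∫ y, (∫ w, f (t, y, w)) • gradK (x - y)))) := by
  have hf1 : ContDiff ℝ 1 f₀ := hf₀smooth.of_le (by norm_num)
  let lam : ℝ → ℝ := fun t => Real.exp (max 0 (min t T) / ε)
  have hlamc : Continuous lam := by fun_prop
  have hlampos : ∀ t, 0 < lam t := fun t => Real.exp_pos _
  have hlam1 : ∀ t, 1 ≤ lam t := fun t => Real.one_le_exp (by positivity)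
  have hlamT : ∀ t, lam t ≤ Real.exp (T / ε) := fun t => by
    apply Real.exp_le_exp.2
    gcongr
    exact max_le hT.le (min_le_right _ _)
  have hlamt : ∀ t ∈ Icc (0:ℝ) T, lam t = Real.exp (t / ε) := fun t ht => by
    simp only [lam]
    rw [min_eq_left ht.2, max_eq_right ht.1]
  have hEp := Real.exp_pos (T / ε)
  obtain ⟨Φ, Ψ, hΦc, hΨ, hΨ0, hmp, hΦΨ, hfd⟩ := KinAgg.core (fun t => lam t - 1)
    (fun t => -(lam t / ε)) (fun t => ε * (1 - (lam t)⁻¹)) (by fun_prop) (by fun_prop)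
    (continuous_const.mul (continuous_const.sub (hlamc.inv₀ (fun t => (hlampos t).ne'))))
    (fun t => by
      have := (hlampos t).ne'
      field_simp
      ring) (Real.exp (T / ε) + Real.exp (T / ε) / ε + ε)
    (fun t => by
      have h1 := hlam1 t
      have h2 := hlamT t
      have h3 : 0 < Real.exp (T / ε) / ε := by positivity
      rw [abs_of_nonneg (by linarith)]
      linarith)
    (fun t => by
      have h1 := hlampos t
      have h2 := hlamT t
      have h3 : lam t / ε ≤ Real.exp (T / ε) / ε := by gcongr
      rw [abs_neg, abs_of_nonneg (by positivity)]
      linarith)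
    (fun t => by
      have h1 := hlampos t
      have h2 : (lam t)⁻¹ ≤ 1 := inv_le_one_of_one_le₀ (hlam1 t)
      have h4 : 0 < (lam t)⁻¹ := by positivity
      have h3 : 0 < Real.exp (T / ε) / ε := by positivity
      rw [abs_of_nonneg (mul_nonneg hε.le (by linarith))]
      nlinarith)
    gradK M hbound L hlip f₀ hf₀int
  let f : ℝ × KinAgg.EE d × KinAgg.EE d → ℝ := fun q => Real.exp (q.1 / ε) ^ d *
      f₀ (Ψ (q.1, (q.2.1 - (ε * (Real.exp (q.1 / ε) - 1)) • q.2.2, Real.exp (q.1 / ε) • q.2.2)))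
  have hcons := fun t (ht : t ∈ Icc (0:ℝ) T) => KinAgg.consistency (Real.exp (t / ε))
    (ε * (Real.exp (t / ε) - 1)) (ε * (1 - (lam t)⁻¹)) (Real.exp_pos _) (by
      rw [hlamt t ht]
      have := (Real.exp_pos (t / ε)).ne'
      field_simp) gradK M hbound hlip.continuous f₀ hf₀int
      (fun z => Φ (t, z)) (fun z => Ψ (t, z)) (by fun_prop) (hmp t) (hΦΨ t)
      (fun p => f (t, p.1, p.2)) (fun p => rfl)
  have hfc : ContDiff ℝ 1 f := by
    simp only [f]
    fun_prop
  refine ⟨f, hfc, fun t ht => (hcons t ht).1, fun x v => ?_, fun t ht x v => ?_⟩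
  · simp [f, hΨ0]
  · have h1 := (hcons t ht).2 x
    simp only at h1
    rw [h1]
    refine (KinAgg.transport ε hε f₀ hf1 Ψ hΨ f rfl t x v _ ?_).2
    have h2 := hfd t (x - (ε * (Real.exp (t / ε) - 1)) • v, Real.exp (t / ε) • v)
    have h3 : KinAgg.ell (ε * (1 - (lam t)⁻¹))
        (x - (ε * (Real.exp (t / ε) - 1)) • v, Real.exp (t / ε) • v) = x := by
      simp only [KinAgg.ell]
      rw [hlamt t ht, smul_smul]
      have h4 : ε * (1 - (Real.exp (t / ε))⁻¹) * Real.exp (t / ε) =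
          ε * (Real.exp (t / ε) - 1) := by
        have := (Real.exp_pos (t / ε)).ne'
        field_simp
      rw [h4, sub_add_cancel]
    simp only [KinAgg.bfield, h3, KinAgg.force] at h2
    rw [← hlamt t ht] at h2 ⊢
    exact h2
end

section
/- Assume ∇K ∈ W^{1,∞}(ℝ^d), let f₀ be a Borel probability measure on ℝ^d × ℝ^d supported in the ball B_{R₀}, let T > 0, ε > 0, and let f_ε : [0,T] → P(ℝ^d × ℝ^d) be a measure solution of the kinetic aggregation equation with inertia parameter ε and initial datum f₀, with x-marginals ρ_ε(t). Set J₀ = ∫∫ |v + (∇K ∗ ρ_ε(0))(x)| df₀(x,v). Then there exist constants C₀ and ε₀ > 0 depending only on ‖∇K‖_{W^{1,∞}} and R₀ such that for every ε ≤ ε₀, every t ∈ [0,T], and every bounded continuous φ : ℝ^d × ℝ^d → ℝ, | ∫∫ φ(x,v) (v + (∇K ∗ ρ_ε(t))(x)) df_ε(t)(x,v) | ≤ ‖φ‖_{L^∞} ( J₀ e^{−t/(2ε)} + C₀ ε ). -/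
open Set Filter Topology MeasureTheory BoundedContinuousFunction

theorem damped_bound {E : Type*} [NormedAddCommGroup E] [NormedSpace ℝ E]
    (ε t : ℝ) (hε : 0 < ε) (ht : 0 ≤ t) (u g : ℝ → E) (b B : ℝ → ℝ)
    (hu : ∀ s ∈ Icc (0:ℝ) t, HasDerivAt u (ε⁻¹ • (-u s - g s)) s)
    (hg : ∀ s ∈ Icc (0:ℝ) t, ‖g s‖ ≤ b s)
    (hB : ∀ s, HasDerivAt B (Real.exp (s / ε) / ε * b s) s) :
    Real.exp (t / ε) * ‖u t‖ ≤ ‖u 0‖ + B t - B 0 := by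
  have hexp : ∀ s : ℝ, HasDerivAt (fun s => Real.exp (s / ε)) (Real.exp (s / ε) * (1 / ε)) s :=
    fun s => ((hasDerivAt_id s).div_const ε).exp
  have hd : ∀ s ∈ Icc (0:ℝ) t, HasDerivAt (fun s => Real.exp (s / ε) • u s)
      (-((Real.exp (s / ε) / ε) • g s)) s := by
    intro s hs
    have h := (hexp s).smul (hu s hs)
    refine HasDerivAt.congr_deriv h ?_
    simp only [smul_smul, smul_sub, smul_neg, one_mul, div_eq_mul_inv]
    abel
  have key := image_norm_le_of_norm_deriv_right_le_deriv_boundary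
    (f := fun s => Real.exp (s / ε) • u s) (a := 0) (b := t)
    (B := fun s => ‖u 0‖ + B s - B 0)
    (fun s hs => (hd s hs).continuousAt.continuousWithinAt)
    (fun s hs => (hd s ⟨hs.1, hs.2.le⟩).hasDerivWithinAt)
    (by simp) (fun s => ((hB s).const_add _).sub_const _)
    (by
      intro s hs
      have he := Real.exp_pos (s / ε)
      rw [norm_neg, norm_smul, Real.norm_of_nonneg (by positivity)]
      exact mul_le_mul_of_nonneg_left (hg s ⟨hs.1, hs.2.le⟩) (by positivity))
    (x := t) ⟨ht, le_rfl⟩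
  simpa [norm_smul] using key

theorem vel_bound {E : Type*} [NormedAddCommGroup E] [NormedSpace ℝ E]
    (ε t A : ℝ) (hε : 0 < ε) (ht : 0 ≤ t) (hA : 0 ≤ A) (u g : ℝ → E)
    (hu : ∀ s ∈ Icc (0:ℝ) t, HasDerivAt u (ε⁻¹ • (-u s - g s)) s)
    (hg : ∀ s ∈ Icc (0:ℝ) t, ‖g s‖ ≤ A) :
    ‖u t‖ ≤ ‖u 0‖ + A := by
  have h := damped_bound ε t hε ht u g (fun _ => A) (fun s => Real.exp (s / ε) * A) hu hg
    (by
      intro s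
      refine HasDerivAt.congr_deriv ((((hasDerivAt_id s).div_const ε).exp).mul_const A) ?_
      simp only [id]; ring)
  simp only [zero_div, Real.exp_zero] at h
  have h1 : 1 ≤ Real.exp (t / ε) := Real.one_le_exp (by positivity)
  have h2 := norm_nonneg (u 0)
  by_contra hc
  push Not at hc
  nlinarith [norm_nonneg (u t)]

theorem w_bound {E : Type*} [NormedAddCommGroup E] [NormedSpace ℝ E]
    (ε t L : ℝ) (hε : 0 < ε) (ht : 0 ≤ t) (hL : 0 ≤ L) (u g : ℝ → E)
    (hu : ∀ s ∈ Icc (0:ℝ) t, HasDerivAt u (ε⁻¹ • (-u s - g s)) s)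
    (hg : ∀ s ∈ Icc (0:ℝ) t, ‖g s - g t‖ ≤ L * (t - s)) :
    ‖u t + g t‖ ≤ ‖u 0 + g 0‖ * Real.exp (-t / (2 * ε)) + L * ε := by
  have h := damped_bound ε t hε ht (fun s => u s + g t) (fun s => g s - g t)
    (fun s => L * (t - s)) (fun s => Real.exp (s / ε) * (L * (t - s + ε)))
    (by
      intro s hs
      convert (hu s hs).add_const (g t) using 1
      congr 1; abel) hg
    (by
      intro s
      refine HasDerivAt.congr_deriv ((((hasDerivAt_id s).div_const ε).exp).mul
        ((((hasDerivAt_id s).const_sub t).add_const ε).const_mul L)) ?_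
      simp only [id]; field_simp; ring)
  simp only [zero_div, Real.exp_zero, sub_self, sub_zero, zero_add, one_mul] at h
  have h0 : ‖u 0 + g t‖ ≤ ‖u 0 + g 0‖ + L * t := by
    have := hg 0 ⟨le_rfl, ht⟩
    have e : u 0 + g t = (u 0 + g 0) - (g 0 - g t) := by abel
    rw [e]
    refine (norm_sub_le _ _).trans ?_
    simpa using this
  have h1 : Real.exp (t / ε) * ‖u t + g t‖ ≤ ‖u 0 + g 0‖ + Real.exp (t / ε) * (L * ε) := by
    nlinarith [mul_nonneg hL hε.le]
  have h2 : ‖u t + g t‖ ≤ ‖u 0 + g 0‖ * Real.exp (-(t / ε)) + L * ε := by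
    have h3 := mul_le_mul_of_nonneg_left h1 (Real.exp_pos (-(t / ε))).le
    have h4 : Real.exp (-(t / ε)) * Real.exp (t / ε) = 1 := by
      rw [← Real.exp_add]; simp
    rw [mul_add, ← mul_assoc, ← mul_assoc, h4] at h3
    linarith
  refine h2.trans ?_
  gcongr
  rw [neg_div, neg_le_neg_iff]
  gcongr
  linarith

/-- **Main estimate for measure-valued solutions (Proposition 4.6).**
There exist constants `C₀, ε₀ > 0`, depending only on the dimension, a bound
`A` for `‖∇K‖_{W^{1,∞}}` and the support radius `R₀` of `f₀`, such that for
every measure solution `f_ε` of the kinetic aggregation equation with inertia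
parameter `ε ≤ ε₀`, every `t ∈ [0,T]` and every bounded continuous `φ`,
`|∫∫ φ(x,v)(v + (∇K ∗ ρ_ε(t))(x)) df_ε(t)| ≤ ‖φ‖_∞ (J₀ e^{-t/(2ε)} + C₀ ε)`,
where `J₀ = ∫∫ |v + (∇K ∗ ρ_ε(0))(x)| df₀`. -/
theorem kinetic_moment_estimate_measure
    (d : ℕ) (A R₀ : ℝ) (hA : 0 ≤ A) (hR₀ : 0 ≤ R₀) :
    ∃ C₀ ε₀ : ℝ, 0 < ε₀ ∧
      ∀ (T ε : ℝ), 0 < T → 0 < ε → ε ≤ ε₀ →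
      ∀ gradK : EuclideanSpace ℝ (Fin d) → EuclideanSpace ℝ (Fin d),
        (∀ z, ‖gradK z‖ ≤ A) →
        (∀ z w, ‖gradK z - gradK w‖ ≤ A * ‖z - w‖) →
      ∀ f₀ : Measure (EuclideanSpace ℝ (Fin d) × EuclideanSpace ℝ (Fin d)),
        IsProbabilityMeasure f₀ →
        f₀ {p | R₀ ^ 2 < ‖p.1‖ ^ 2 + ‖p.2‖ ^ 2} = 0 →
      ∀ f : ℝ → Measure (EuclideanSpace ℝ (Fin d) × EuclideanSpace ℝ (Fin d)),
        IsKineticMeasureSolution gradK ε T f₀ f →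
      ∀ t ∈ Icc (0:ℝ) T,
      ∀ φ : BoundedContinuousFunction
          (EuclideanSpace ℝ (Fin d) × EuclideanSpace ℝ (Fin d)) ℝ,
        ‖∫ p, φ p • (p.2 + interactionField gradK ((f t).map Prod.fst) p.1) ∂(f t)‖ ≤
          ‖φ‖ * ((∫ p, ‖p.2 + interactionField gradK (f₀.map Prod.fst) p.1‖ ∂f₀) *
              Real.exp (-t / (2 * ε)) + C₀ * ε) := by
  refine ⟨2 * A * (R₀ + A), 1, one_pos, ?_⟩
  intro T ε hT hε _ gradK hb hLip f₀ hf₀ hsupp f ⟨Φ, hΦm, hΦ0, hΦd, hΦf⟩ t ht φ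
  have hcont : Continuous gradK := by
    have : LipschitzWith ⟨A, hA⟩ gradK := LipschitzWith.of_dist_le_mul (by
      intro z w
      rw [dist_eq_norm, dist_eq_norm]
      exact hLip z w)
    exact this.continuous
  have hmK : ∀ s x, AEStronglyMeasurable (fun q => gradK (x - (Φ s q).1)) f₀ := by
    intro s x
    exact (hcont.measurable.comp
      (measurable_const.sub (measurable_fst.comp (hΦm s)))).aestronglyMeasurable
  have hint : ∀ s x, Integrable (fun q => gradK (x - (Φ s q).1)) f₀ := fun s x =>
    Integrable.of_bound (hmK s x) A (Eventually.of_forall fun q => hb _)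
  have hF : ∀ s ∈ Icc (0:ℝ) T, ∀ x, interactionField gradK ((f s).map Prod.fst) x
      = ∫ q, gradK (x - (Φ s q).1) ∂f₀ := by
    intro s hs x
    have hc : Continuous fun y => gradK (x - y) := by fun_prop
    rw [interactionField, hΦf s hs, Measure.map_map measurable_fst (hΦm s),
      integral_map (measurable_fst.comp (hΦm s)).aemeasurable
        hc.aestronglyMeasurable]
    rfl
  have hFb : ∀ s ∈ Icc (0:ℝ) T, ∀ x,
      ‖interactionField gradK ((f s).map Prod.fst) x‖ ≤ A := by
    intro s hs x
    rw [hF s hs]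
    simpa using norm_integral_le_of_norm_le_const (μ := f₀) (C := A)
      (Eventually.of_forall fun q => hb (x - (Φ s q).1))
  have hFc : ∀ s ∈ Icc (0:ℝ) T,
      Continuous (interactionField gradK ((f s).map Prod.fst)) := by
    intro s hs
    have : interactionField gradK ((f s).map Prod.fst)
        = fun x => ∫ q, gradK (x - (Φ s q).1) ∂f₀ := funext (hF s hs)
    rw [this]
    exact continuous_of_dominated (bound := fun _ => A) (fun x => hmK s x)
      (fun x => Eventually.of_forall fun q => hb _) (integrable_const _)
      (Eventually.of_forall fun q => by fun_prop)
  have h0T : (0:ℝ) ∈ Icc (0:ℝ) T := ⟨le_rfl, hT.le⟩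
  have hf0 : f 0 = f₀ := by
    have : Φ 0 = id := funext hΦ0
    rw [hΦf 0 h0T, this, Measure.map_id]
  have hae : ∀ᵐ p ∂f₀, ‖p.2‖ ≤ R₀ := by
    have : ∀ᵐ p ∂f₀, ¬ (R₀ ^ 2 < ‖p.1‖ ^ 2 + ‖p.2‖ ^ 2) := by
      rw [ae_iff]; simpa using hsupp
    filter_upwards [this] with p hp
    push Not at hp
    exact le_of_sq_le_sq (by nlinarith [sq_nonneg ‖p.1‖]) hR₀
  have hvel : ∀ p : EuclideanSpace ℝ (Fin d) × EuclideanSpace ℝ (Fin d), ‖p.2‖ ≤ R₀ →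
      ∀ s ∈ Icc (0:ℝ) T, ‖(Φ s p).2‖ ≤ R₀ + A := by
    intro p hp s hs
    have := vel_bound ε s A hε hs.1 hA (fun s => (Φ s p).2)
      (fun s => interactionField gradK ((f s).map Prod.fst) (Φ s p).1)
      (fun r hr => (hΦd p r ⟨hr.1, hr.2.trans hs.2⟩).2)
      (fun r hr => hFb r ⟨hr.1, hr.2.trans hs.2⟩ _)
    simp only [hΦ0] at this
    linarith
  have hpos : ∀ p : EuclideanSpace ℝ (Fin d) × EuclideanSpace ℝ (Fin d), ‖p.2‖ ≤ R₀ →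
      ∀ s ∈ Icc (0:ℝ) t, ‖(Φ s p).1 - (Φ t p).1‖ ≤ (R₀ + A) * (t - s) := by
    intro p hp s hs
    have := (convex_Icc (0:ℝ) T).norm_image_sub_le_of_norm_hasDerivWithin_le
      (f := fun s => (Φ s p).1) (fun r hr => (hΦd p r hr).1.hasDerivWithinAt)
      (hvel p hp) ht (⟨hs.1, hs.2.trans ht.2⟩ : s ∈ Icc (0:ℝ) T)
    rwa [Real.norm_eq_abs, abs_sub_comm, abs_of_nonneg (sub_nonneg.2 hs.2)] at this
  have hG : ∀ p : EuclideanSpace ℝ (Fin d) × EuclideanSpace ℝ (Fin d), ‖p.2‖ ≤ R₀ →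
      ∀ s ∈ Icc (0:ℝ) t, ‖interactionField gradK ((f s).map Prod.fst) (Φ s p).1
        - interactionField gradK ((f t).map Prod.fst) (Φ t p).1‖
        ≤ 2 * A * (R₀ + A) * (t - s) := by
    intro p hp s hs
    rw [hF s ⟨hs.1, hs.2.trans ht.2⟩, hF t ht, ← integral_sub (hint _ _) (hint _ _)]
    have := norm_integral_le_of_norm_le_const (μ := f₀)
      (f := fun q => gradK ((Φ s p).1 - (Φ s q).1) - gradK ((Φ t p).1 - (Φ t q).1))
      (C := 2 * A * (R₀ + A) * (t - s)) (by
        filter_upwards [hae] with q hq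
        refine (hLip _ _).trans ?_
        have e : (Φ s p).1 - (Φ s q).1 - ((Φ t p).1 - (Φ t q).1)
          = ((Φ s p).1 - (Φ t p).1) - ((Φ s q).1 - (Φ t q).1) := by abel
        have h1 := norm_sub_le ((Φ s p).1 - (Φ t p).1) ((Φ s q).1 - (Φ t q).1)
        have h2 := hpos p hp s hs
        have h3 := hpos q hq s hs
        rw [e]
        calc _ ≤ A * (2 * ((R₀ + A) * (t - s))) :=
              mul_le_mul_of_nonneg_left (by linarith) hA
          _ = _ := by ring)
    simpa using this
  have hw : ∀ p : EuclideanSpace ℝ (Fin d) × EuclideanSpace ℝ (Fin d), ‖p.2‖ ≤ R₀ →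
      ‖(Φ t p).2 + interactionField gradK ((f t).map Prod.fst) (Φ t p).1‖ ≤
      ‖p.2 + interactionField gradK (f₀.map Prod.fst) p.1‖ * Real.exp (-t / (2 * ε))
        + 2 * A * (R₀ + A) * ε := by
    intro p hp
    have := w_bound ε t (2 * A * (R₀ + A)) hε ht.1 (by positivity) (fun s => (Φ s p).2)
      (fun s => interactionField gradK ((f s).map Prod.fst) (Φ s p).1)
      (fun r hr => (hΦd p r ⟨hr.1, hr.2.trans ht.2⟩).2) (hG p hp)
    simpa only [hΦ0, hf0] using this
  have hFc' := hFc t ht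
  have hF0c := hFc 0 h0T
  have hF0b := hFb 0 h0T
  rw [hf0] at hF0c hF0b
  have hm : AEStronglyMeasurable (fun p : EuclideanSpace ℝ (Fin d) × EuclideanSpace ℝ (Fin d) =>
      φ p • (p.2 + interactionField gradK ((f t).map Prod.fst) p.1)) (f₀.map (Φ t)) :=
    Continuous.aestronglyMeasurable (by fun_prop)
  have hJ : Integrable (fun p : EuclideanSpace ℝ (Fin d) × EuclideanSpace ℝ (Fin d) =>
      ‖p.2 + interactionField gradK (f₀.map Prod.fst) p.1‖) f₀ := by
    refine Integrable.of_bound (Continuous.aestronglyMeasurable (by fun_prop)) (R₀ + A) ?_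
    filter_upwards [hae] with p hp
    rw [norm_norm]
    exact (norm_add_le _ _).trans (add_le_add hp (hF0b _))
  have hI : Integrable (fun p : EuclideanSpace ℝ (Fin d) × EuclideanSpace ℝ (Fin d) =>
      ‖p.2 + interactionField gradK (f₀.map Prod.fst) p.1‖ * Real.exp (-t / (2 * ε))
        + 2 * A * (R₀ + A) * ε) f₀ := (hJ.mul_const _).add (integrable_const _)
  have heq : ∫ p, φ p • (p.2 + interactionField gradK ((f t).map Prod.fst) p.1) ∂(f t)
      = ∫ p, φ (Φ t p) • ((Φ t p).2
        + interactionField gradK ((f t).map Prod.fst) (Φ t p).1) ∂f₀ := by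
    rw [← integral_map (hΦm t).aemeasurable hm, ← hΦf t ht]
  rw [heq]
  refine (norm_integral_le_of_norm_le (hI.const_mul ‖φ‖) ?_).trans (le_of_eq ?_)
  · filter_upwards [hae] with p hp
    rw [norm_smul]
    exact mul_le_mul (φ.norm_coe_le_norm _) (hw p hp) (norm_nonneg _) (norm_nonneg _)
  · rw [integral_const_mul, integral_add (hJ.mul_const _) (integrable_const _),
      integral_mul_const]
    simp
end

section
/- Assume ∇K ∈ W^{1,∞}(ℝ^d), let f₀ be a Borel probability measure on ℝ^d × ℝ^d supported in the ball B_{R₀}, ε > 0, T > 0, and let f : [0,T] → P(ℝ^d × ℝ^d) be a measure solution of the kinetic aggregation equation with inertia parameter ε and initial datum f₀, with x-marginals ρ(t). Set V = max(R₀, ‖∇K‖_{L^∞}). Then for every continuously differentiable ψ : ℝ^d → ℝ with bounded gradient and all s, t ∈ [0,T], | ∫ ψ dρ(t) − ∫ ψ dρ(s) | ≤ V ‖∇ψ‖_{L^∞} |t − s|. In particular the map t ↦ ∫ ψ dρ(t) is Lipschitz with a constant independent of ε. -/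
open Set Filter Topology MeasureTheory

/-- **Equi-Lipschitz continuity in time of the macroscopic density
(uniformly in ε).** If `∇K` is bounded by `M` and Lipschitz, `f₀` is a
probability measure supported in the ball `B_{R₀}` of `ℝ^{2d}`, and `f` is a
measure solution with `x`-marginals `ρ t = (f t).map Prod.fst`, then for every
`C¹` function `ψ : ℝ^d → ℝ` whose gradient is bounded by `Cψ`,
`|∫ψ dρ(t) − ∫ψ dρ(s)| ≤ V · Cψ · |t − s|` with `V = max R₀ M`;
in particular `t ↦ ∫ψ dρ(t)` is Lipschitz with a constant independent of `ε`. -/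
theorem macroscopic_density_time_lipschitz
    (d : ℕ) (T ε M R₀ : ℝ) (hT : 0 < T) (hε : 0 < ε) (hM : 0 ≤ M) (hR₀ : 0 ≤ R₀)
    (gradK : EuclideanSpace ℝ (Fin d) → EuclideanSpace ℝ (Fin d)) (L : NNReal)
    (hbound : ∀ z, ‖gradK z‖ ≤ M)
    (hlip : LipschitzWith L gradK)
    (f₀ : Measure (EuclideanSpace ℝ (Fin d) × EuclideanSpace ℝ (Fin d)))
    [IsProbabilityMeasure f₀]
    (hsupp : f₀ {p | R₀ ^ 2 < ‖p.1‖ ^ 2 + ‖p.2‖ ^ 2} = 0)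
    (f : ℝ → Measure (EuclideanSpace ℝ (Fin d) × EuclideanSpace ℝ (Fin d)))
    (hf : IsKineticMeasureSolution gradK ε T f₀ f)
    (ψ : EuclideanSpace ℝ (Fin d) → ℝ) (Cψ : ℝ)
    (hψ : ContDiff ℝ 1 ψ)
    (hψgrad : ∀ x, ‖fderiv ℝ ψ x‖ ≤ Cψ) :
    ∀ s ∈ Icc (0:ℝ) T, ∀ t ∈ Icc (0:ℝ) T,
      |(∫ x, ψ x ∂((f t).map Prod.fst)) - ∫ x, ψ x ∂((f s).map Prod.fst)| ≤
        max R₀ M * Cψ * |t - s| := by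
  obtain ⟨Φ, hmeas, h0, hode, hpush⟩ := hf
  set V := max R₀ M with hV
  have hV0 : 0 ≤ V := le_trans hR₀ (le_max_left _ _)
  have hC0 : 0 ≤ Cψ := le_trans (norm_nonneg _) (hψgrad 0)
  -- the interaction field is bounded by `M`
  have hF : ∀ t ∈ Icc (0:ℝ) T, ∀ x,
      ‖interactionField gradK ((f t).map Prod.fst) x‖ ≤ V := by
    intro t ht x
    have : IsProbabilityMeasure (f t) := by
      rw [hpush t ht]
      exact Measure.isProbabilityMeasure_map (hmeas t).aemeasurable
    have : IsProbabilityMeasure ((f t).map Prod.fst) :=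
      Measure.isProbabilityMeasure_map measurable_fst.aemeasurable
    unfold interactionField
    have h := norm_integral_le_of_norm_le_const (μ := (f t).map Prod.fst)
      (f := fun y => gradK (x - y)) (C := M) (Eventually.of_forall fun y => hbound _)
    simp only [probReal_univ, mul_one] at h
    exact h.trans (le_max_right _ _)
  -- velocity bound along characteristics
  have hvel : ∀ p : EuclideanSpace ℝ (Fin d) × EuclideanSpace ℝ (Fin d), ‖p.2‖ ≤ R₀ →
      ∀ t ∈ Icc (0:ℝ) T, ‖(Φ t p).2‖ ≤ V := by
    intro p hp t ht
    have hexp : ∀ r : ℝ, HasDerivAt (fun r : ℝ => Real.exp (ε⁻¹ * r))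
        (Real.exp (ε⁻¹ * r) * ε⁻¹) r := by
      intro r
      simpa using ((hasDerivAt_id r).const_mul ε⁻¹).exp
    have hw : ∀ r ∈ Icc (0:ℝ) T, HasDerivAt (fun r => Real.exp (ε⁻¹ * r) • (Φ r p).2)
        (-((Real.exp (ε⁻¹ * r) * ε⁻¹) •
          interactionField gradK ((f r).map Prod.fst) (Φ r p).1)) r := by
      intro r hr
      have h := (hexp r).smul (hode p r hr).2
      refine h.congr_deriv ?_
      module
    have key := image_norm_le_of_norm_deriv_right_le_deriv_boundary
      (f := fun r => Real.exp (ε⁻¹ * r) • (Φ r p).2) (a := 0) (b := T)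
      (f' := fun r => (-((Real.exp (ε⁻¹ * r) * ε⁻¹) •
          interactionField gradK ((f r).map Prod.fst) (Φ r p).1)))
      (B := fun r => V * Real.exp (ε⁻¹ * r))
      (B' := fun r => V * (Real.exp (ε⁻¹ * r) * ε⁻¹))
      (fun r hr => (hw r hr).continuousAt.continuousWithinAt)
      (fun r hr => (hw r ⟨hr.1, hr.2.le⟩).hasDerivWithinAt)
      (by simp only [h0, mul_zero, Real.exp_zero, one_smul, mul_one]; exact hp.trans (le_max_left R₀ M))
      (fun r => (hexp r).const_mul V)
      (by
        intro r hr
        have hpos : 0 ≤ Real.exp (ε⁻¹ * r) * ε⁻¹ := by positivity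
        rw [norm_neg, norm_smul, Real.norm_of_nonneg hpos, mul_comm]
        exact mul_le_mul_of_nonneg_right (hF r ⟨hr.1, hr.2.le⟩ _) hpos)
      ht
    rw [norm_smul, Real.norm_of_nonneg (Real.exp_pos _).le, mul_comm] at key
    exact le_of_mul_le_mul_right key (Real.exp_pos _)
  have hψd : Differentiable ℝ ψ := hψ.differentiable (by norm_num)
  have hψlip : ∀ x y, ‖ψ y - ψ x‖ ≤ Cψ * ‖y - x‖ := fun x y =>
    convex_univ.norm_image_sub_le_of_norm_fderiv_le (𝕜 := ℝ) (fun z _ => hψd z)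
      (fun z _ => hψgrad z) (mem_univ x) (mem_univ y)
  have hx : ∀ p : EuclideanSpace ℝ (Fin d) × EuclideanSpace ℝ (Fin d), ‖p.2‖ ≤ R₀ →
      ∀ s ∈ Icc (0:ℝ) T, ∀ t ∈ Icc (0:ℝ) T,
      ‖(Φ t p).1 - (Φ s p).1‖ ≤ V * ‖t - s‖ := by
    intro p hp s hs t ht
    exact (convex_Icc (0:ℝ) T).norm_image_sub_le_of_norm_hasDerivWithin_le
      (f := fun r => (Φ r p).1) (f' := fun r => (Φ r p).2)
      (fun r hr => (hode p r hr).1.hasDerivWithinAt) (fun r hr => hvel p hp r hr) hs ht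
  have hdiff : ∀ p : EuclideanSpace ℝ (Fin d) × EuclideanSpace ℝ (Fin d), ‖p.2‖ ≤ R₀ →
      ∀ s ∈ Icc (0:ℝ) T, ∀ t ∈ Icc (0:ℝ) T,
      ‖ψ (Φ t p).1 - ψ (Φ s p).1‖ ≤ V * Cψ * |t - s| := by
    intro p hp s hs t ht
    calc _ ≤ Cψ * ‖(Φ t p).1 - (Φ s p).1‖ := hψlip _ _
      _ ≤ Cψ * (V * ‖t - s‖) := mul_le_mul_of_nonneg_left (hx p hp s hs t ht) hC0
      _ = _ := by rw [Real.norm_eq_abs]; ring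
  have hae : ∀ᵐ p ∂f₀, ‖p.1‖ ≤ R₀ ∧ ‖p.2‖ ≤ R₀ := by
    have : ∀ᵐ p ∂f₀, ¬ (R₀ ^ 2 < ‖p.1‖ ^ 2 + ‖p.2‖ ^ 2) := by
      rw [ae_iff]
      simpa only [not_not] using hsupp
    filter_upwards [this] with p hp
    have hp' := not_lt.mp hp
    exact ⟨abs_le_of_sq_le_sq' (by nlinarith [sq_nonneg ‖p.2‖]) hR₀ |>.2,
      abs_le_of_sq_le_sq' (by nlinarith [sq_nonneg ‖p.1‖]) hR₀ |>.2⟩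
  have hm : ∀ t, Measurable fun p => ψ (Φ t p).1 := fun t =>
    hψ.continuous.measurable.comp (measurable_fst.comp (hmeas t))
  have hint : ∀ t ∈ Icc (0:ℝ) T, Integrable (fun p => ψ (Φ t p).1) f₀ := by
    intro t ht
    refine Integrable.of_bound (hm t).aestronglyMeasurable
      (V * Cψ * |t - 0| + (Cψ * R₀ + ‖ψ 0‖)) ?_
    filter_upwards [hae] with p hp
    have h1 := hdiff p hp.2 0 ⟨le_rfl, hT.le⟩ t ht
    have h2 := hψlip 0 p.1
    rw [h0] at h1
    rw [sub_zero] at h2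
    have h3 := mul_le_mul_of_nonneg_left hp.1 hC0
    have h4 := norm_sub_norm_le (ψ (Φ t p).1) (ψ p.1)
    have h5 := norm_sub_norm_le (ψ p.1) (ψ 0)
    linarith
  have hrw : ∀ t ∈ Icc (0:ℝ) T,
      ∫ x, ψ x ∂((f t).map Prod.fst) = ∫ p, ψ (Φ t p).1 ∂f₀ := by
    intro t ht
    rw [hpush t ht, Measure.map_map measurable_fst (hmeas t),
      integral_map (measurable_fst.comp (hmeas t)).aemeasurable
        hψ.continuous.measurable.aestronglyMeasurable]
    rfl
  intro s hs t ht
  rw [hrw s hs, hrw t ht, ← integral_sub (hint t ht) (hint s hs), ← Real.norm_eq_abs]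
  have h := norm_integral_le_of_norm_le_const (μ := f₀)
    (f := fun p => ψ (Φ t p).1 - ψ (Φ s p).1) (C := V * Cψ * |t - s|)
    (by filter_upwards [hae] with p hp using hdiff p hp.2 s hs t ht)
  simpa only [probReal_univ, mul_one] using h
end

section
/- Assume ∇K ∈ W^{1,∞}(ℝ^d), let f₀ be a Borel probability measure on ℝ^d × ℝ^d supported in the ball B_{R₀}, ε > 0, T > 0, and let f : [0,T] → P(ℝ^d × ℝ^d) be a measure solution of the kinetic aggregation equation with inertia parameter ε and initial datum f₀, with x-marginals ρ(t). Set V = max(R₀, ‖∇K‖_{L^∞}). Then for all s, t ∈ [0,T] and all x, y ∈ ℝ^d, | (∇K ∗ ρ(t))(x) − (∇K ∗ ρ(s))(y) | ≤ ‖∇K‖_{W^{1,∞}} (1 + V) ( |t − s| + |x − y| ). In particular the interaction field (t,x) ↦ (∇K ∗ ρ(t))(x) is Lipschitz in (t,x) with a constant independent of ε. -/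
open Set Filter Topology MeasureTheory

theorem velocity_bound_aux {E : Type*} [NormedAddCommGroup E] [NormedSpace ℝ E]
    (v F : ℝ → E) (T ε V : ℝ) (hε : 0 < ε) (h0 : ‖v 0‖ ≤ V)
    (hF : ∀ t ∈ Icc (0:ℝ) T, ‖F t‖ ≤ V)
    (hv : ∀ t ∈ Icc (0:ℝ) T, HasDerivAt v (ε⁻¹ • (-(v t) - F t)) t) :
    ∀ t ∈ Icc (0:ℝ) T, ‖v t‖ ≤ V := by
  intro t ht
  have hexp : ∀ s : ℝ, HasDerivAt (fun s => Real.exp (ε⁻¹ * s)) (Real.exp (ε⁻¹ * s) * ε⁻¹) s := by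
    intro s
    have := ((hasDerivAt_id s).const_mul ε⁻¹).exp
    simpa using this
  have hw : ∀ s ∈ Icc (0:ℝ) T, HasDerivAt (fun s => Real.exp (ε⁻¹ * s) • v s)
      (-((Real.exp (ε⁻¹ * s) * ε⁻¹) • F s)) s := by
    intro s hs
    have h := (hexp s).smul (hv s hs)
    refine h.congr_deriv ?_
    module
  have key := image_norm_le_of_norm_deriv_right_le_deriv_boundary (a := 0) (b := T)
    (f := fun s => Real.exp (ε⁻¹ * s) • v s)
    (f' := fun s => -((Real.exp (ε⁻¹ * s) * ε⁻¹) • F s))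
    (B := fun s => Real.exp (ε⁻¹ * s) * V) (B' := fun s => Real.exp (ε⁻¹ * s) * ε⁻¹ * V)
    (fun s hs => (hw s hs).continuousAt.continuousWithinAt)
    (fun s hs => (hw s ⟨hs.1, hs.2.le⟩).hasDerivWithinAt)
    (by simpa using h0)
    (fun s => (hexp s).mul_const V)
    (by
      intro s hs
      have hp : 0 ≤ Real.exp (ε⁻¹ * s) * ε⁻¹ := by positivity
      rw [norm_neg, norm_smul, Real.norm_of_nonneg hp]
      exact mul_le_mul_of_nonneg_left (hF s ⟨hs.1, hs.2.le⟩) hp)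
    ht
  simp only [norm_smul, Real.norm_of_nonneg (Real.exp_pos _).le] at key
  exact le_of_mul_le_mul_left key (Real.exp_pos _)

/-- **Equi-Lipschitz continuity in space-time of the interaction field
(uniformly in ε).** Assume `‖∇K‖_{W^{1,∞}} ≤ A` (i.e. `∇K` is bounded by `A`
and `A`-Lipschitz), `f₀` is a probability measure supported in the ball
`B_{R₀}` of `ℝ^{2d}`, and `f` is a measure solution with `x`-marginals
`ρ t = (f t).map Prod.fst`. Then with `V = max R₀ A`, for all `s,t ∈ [0,T]`
and all `x,y`, `|(∇K ∗ ρ(t))(x) − (∇K ∗ ρ(s))(y)| ≤ A(1+V)(|t−s| + |x−y|)`;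
in particular the field `(t,x) ↦ (∇K ∗ ρ(t))(x)` is Lipschitz with a constant
independent of `ε`. -/
theorem interaction_field_spacetime_lipschitz
    (d : ℕ) (T ε A R₀ : ℝ) (hT : 0 < T) (hε : 0 < ε) (hA : 0 ≤ A) (hR₀ : 0 ≤ R₀)
    (gradK : EuclideanSpace ℝ (Fin d) → EuclideanSpace ℝ (Fin d))
    (hbound : ∀ z, ‖gradK z‖ ≤ A)
    (hlip : ∀ z w, ‖gradK z - gradK w‖ ≤ A * ‖z - w‖)
    (f₀ : Measure (EuclideanSpace ℝ (Fin d) × EuclideanSpace ℝ (Fin d)))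
    [IsProbabilityMeasure f₀]
    (hsupp : f₀ {p | R₀ ^ 2 < ‖p.1‖ ^ 2 + ‖p.2‖ ^ 2} = 0)
    (f : ℝ → Measure (EuclideanSpace ℝ (Fin d) × EuclideanSpace ℝ (Fin d)))
    (hf : IsKineticMeasureSolution gradK ε T f₀ f) :
    ∀ s ∈ Icc (0:ℝ) T, ∀ t ∈ Icc (0:ℝ) T,
      ∀ x y : EuclideanSpace ℝ (Fin d),
        ‖interactionField gradK ((f t).map Prod.fst) x -
            interactionField gradK ((f s).map Prod.fst) y‖ ≤
          A * (1 + max R₀ A) * (|t - s| + ‖x - y‖) := by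
  obtain ⟨Φ, hΦm, hΦ0, hΦd, hΦf⟩ := hf
  have hV0 : 0 ≤ max R₀ A := le_max_of_le_left hR₀
  have hcont : Continuous gradK := by
    refine (LipschitzWith.of_dist_le_mul (K := ⟨A, hA⟩) ?_).continuous
    intro z w
    rw [dist_eq_norm, dist_eq_norm]
    exact hlip z w
  have hfield : ∀ t ∈ Icc (0:ℝ) T, ∀ x, interactionField gradK ((f t).map Prod.fst) x
      = ∫ p, gradK (x - (Φ t p).1) ∂f₀ := by
    intro t ht x
    unfold interactionField
    rw [hΦf t ht, Measure.map_map measurable_fst (hΦm t),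
      integral_map (measurable_fst.comp (hΦm t)).aemeasurable
        (by fun_prop : Continuous fun y => gradK (x - y)).aestronglyMeasurable]
    rfl
  have hint : ∀ t x, Integrable (fun p => gradK (x - (Φ t p).1)) f₀ := by
    intro t x
    refine Integrable.of_bound (C := A) ?_ (Eventually.of_forall fun p => hbound _)
    exact (hcont.measurable.comp
      (measurable_const.sub (measurable_fst.comp (hΦm t)))).aestronglyMeasurable
  have hFb : ∀ t ∈ Icc (0:ℝ) T, ∀ x, ‖interactionField gradK ((f t).map Prod.fst) x‖ ≤ A := by
    intro t ht x
    rw [hfield t ht x]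
    simpa using norm_integral_le_of_norm_le_const (μ := f₀)
      (Eventually.of_forall fun p => hbound (x - (Φ t p).1))
  have hae : ∀ᵐ p ∂f₀, ‖p.2‖ ≤ max R₀ A := by
    have h : ∀ᵐ p ∂f₀, ¬ (R₀ ^ 2 < ‖p.1‖ ^ 2 + ‖p.2‖ ^ 2) := by
      rw [ae_iff]
      simpa using hsupp
    filter_upwards [h] with p hp
    refine le_max_of_le_left (abs_le_of_sq_le_sq' ?_ hR₀).2
    nlinarith [sq_nonneg ‖p.1‖]
  intro s hs t ht x y
  have hX : ∀ᵐ p ∂f₀, ‖(Φ t p).1 - (Φ s p).1‖ ≤ max R₀ A * |t - s| := by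
    filter_upwards [hae] with p hp
    have hvb := velocity_bound_aux (fun r => (Φ r p).2)
      (fun r => interactionField gradK ((f r).map Prod.fst) (Φ r p).1) T ε (max R₀ A) hε
      (by simpa [hΦ0 p] using hp)
      (fun r hr => (hFb r hr _).trans (le_max_right _ _))
      (fun r hr => (hΦd p r hr).2)
    exact (convex_Icc (0:ℝ) T).norm_image_sub_le_of_norm_hasDerivWithin_le
      (f := fun r => (Φ r p).1)
      (fun r hr => (hΦd p r hr).1.hasDerivWithinAt) hvb hs ht
  rw [hfield t ht, hfield s hs, ← integral_sub (hint t x) (hint s y)]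
  have hb : ∀ᵐ p ∂f₀, ‖gradK (x - (Φ t p).1) - gradK (y - (Φ s p).1)‖ ≤
      A * (1 + max R₀ A) * (|t - s| + ‖x - y‖) := by
    filter_upwards [hX] with p hp
    refine (hlip _ _).trans ?_
    rw [mul_assoc]
    refine mul_le_mul_of_nonneg_left ?_ hA
    have h1 : x - (Φ t p).1 - (y - (Φ s p).1) = (x - y) - ((Φ t p).1 - (Φ s p).1) := by abel
    rw [h1]
    refine (norm_sub_le _ _).trans ?_
    nlinarith [mul_nonneg hV0 (norm_nonneg (x - y)), abs_nonneg (t - s)]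
  simpa using norm_integral_le_of_norm_le_const hb
end
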